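/- Let a > 0 and δ ∈ (0,1/8) be fixed. The series ζ_E(s) = Σ_{k≥1} (E_{0,k}(s) + E_{1,k}(s) + E_{2,k}(s)) converges absolutely and locally uniformly on the strip {s ∈ ℂ : 1 < Re(s) < 2}, and its sum extends to a meromorphic function on ℂ which is holomorphic at s = 0. Moreover, for fixed δ, the derivative at 0 of this extension satisfies ζ_E'(0) = 4π·ζ(-1)·a + ζ(0)·log(a) + O(1/a) as a → +∞. -/

import Mathlib

open MeasureTheory Filter

/-- `E_{0,k}(s) = -(sin(πs)/π) · ∫_{k^{δ-1}}^{∞} (k²u² - 1/4)^{-s} · u/(u² + (2πa)²) du`. -/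
noncomputable def cuspE0 (a δ : ℝ) (k : ℕ) (s : ℂ) : ℂ :=
  -(Complex.sin ((Real.pi : ℂ) * s) / (Real.pi : ℂ)) *
    ∫ u in Set.Ioi ((k : ℝ) ^ (δ - 1)),
      (((k : ℝ) ^ 2 * u ^ 2 - 1 / 4 : ℝ) : ℂ) ^ (-s) *
        ((u / (u ^ 2 + (2 * Real.pi * a) ^ 2) : ℝ) : ℂ)

/-- `E_{1,k}(s) = (2 sin(πs)/π) · k · ∫_{k^{δ-1}}^{∞} (k²u² - 1/4)^{-s} · arsinh(u/(2πa)) du`. -/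
noncomputable def cuspE1 (a δ : ℝ) (k : ℕ) (s : ℂ) : ℂ :=
  (2 * Complex.sin ((Real.pi : ℂ) * s) / (Real.pi : ℂ)) * (k : ℂ) *
    ∫ u in Set.Ioi ((k : ℝ) ^ (δ - 1)),
      (((k : ℝ) ^ 2 * u ^ 2 - 1 / 4 : ℝ) : ℂ) ^ (-s) *
        ((Real.arsinh (u / (2 * Real.pi * a)) : ℝ) : ℂ)

/-- `E_{2,k}(s) = (2 sin(πs)/π)·(1/k)·∫_{k^{δ-1}}^{∞} (k²u² - 1/4)^{-s} ·
  (u·(u² + (2πa)²)^{-3/2}/24)·(13 - 15u²(u² + (2πa)²)^{-1}) du`. -/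
noncomputable def cuspE2 (a δ : ℝ) (k : ℕ) (s : ℂ) : ℂ :=
  (2 * Complex.sin ((Real.pi : ℂ) * s) / (Real.pi : ℂ)) * (1 / (k : ℂ)) *
    ∫ u in Set.Ioi ((k : ℝ) ^ (δ - 1)),
      (((k : ℝ) ^ 2 * u ^ 2 - 1 / 4 : ℝ) : ℂ) ^ (-s) *
        (((u * (u ^ 2 + (2 * Real.pi * a) ^ 2) ^ (-(3 : ℝ) / 2) / 24) *
          (13 - 15 * u ^ 2 * (u ^ 2 + (2 * Real.pi * a) ^ 2)⁻¹) : ℝ) : ℂ)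

/-- The summand of `ζ_E(s)`: `E_{0,k}(s) + E_{1,k}(s) + E_{2,k}(s)`. -/
noncomputable def cuspE (a δ : ℝ) (k : ℕ) (s : ℂ) : ℂ :=
  cuspE0 a δ k s + cuspE1 a δ k s + cuspE2 a δ k s

/-!
Put `b = 2πa`. The substitution `x = ku` turns each of the three families of error integrals into
`k ^ (p - 1) ∫_{k ^ δ}^∞ (x ^ 2 - 1 / 4) ^ (-s) φ(x / (k b)) dx` with a fixed density `φ` and
`p = 0`, `1` or `-1`. Expanding `(x ^ 2 - 1 / 4) ^ (-s)` in powers of `x ^ (-2)` reduces the sum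
over `k` to the values at `t = s + j`, `j ≥ 0`, of
`S(t) = ∑ k ^ (p - 1) ∫_{k ^ δ}^∞ x ^ (-2 t) φ(x / (k b)) dx`.
The tail integral is the full Mellin transform minus the integral over `(0, k ^ δ)`. The former
contributes `b ^ (1 - 2 t) ζ(2 t - p) M(t)`, where `M` is the Mellin transform of `φ`, and the
latter, after Taylor expansion of `φ` at `0`, finitely many terms of order `b ^ (-m - 1)` involving
`ζ` and a remainder whose abscissa of convergence tends to `-∞` with the order of expansion because
`δ < 1`.

At `s = 0` the factor `sin(πs) / π` cancels the poles of `S(s)` and, together with the coefficient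
`s / 4` of the shift `j = 1`, those of `S(s + 1)`; the shifts `j ≥ 2` vanish to second order. Only
the Mellin terms for `j = 0, 1` are not `O(1 / b)`: they give `2 ζ(-1) b` from `arsinh`,
`ζ(0) log b - ζ'(0)` from `u / (u ^ 2 + b ^ 2)`, and two multiples of `log b / b` which cancel.
Finally `ζ'(0) = ζ(0) log (2π)` turns `log b` into `log a`.
-/

open scoped Topology

section LocallyDominatedSeries

variable {ι : Type*} {T T' : ι → ℂ → ℂ} {U : Set ℂ}

/-- The series `∑ i, T i` satisfies the Weierstrass M-test near every point of `U`. -/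
def LocallyDominatedOn (T : ι → ℂ → ℂ) (U : Set ℂ) : Prop :=
  ∀ s₀ ∈ U, ∃ V ∈ 𝓝 s₀, ∃ u : ι → ℝ, Summable u ∧ ∀ i, ∀ s ∈ V, ‖T i s‖ ≤ u i

namespace LocallyDominatedOn

lemma summable_norm (hT : LocallyDominatedOn T U) {s : ℂ} (hs : s ∈ U) :
    Summable fun i => ‖T i s‖ := by
  obtain ⟨V, hV, u, hu, hle⟩ := hT s hs
  exact hu.of_nonneg_of_le (fun i => norm_nonneg _) fun i => hle i s (mem_of_mem_nhds hV)

lemma add (hT : LocallyDominatedOn T U) (hT' : LocallyDominatedOn T' U) :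
    LocallyDominatedOn (fun i s => T i s + T' i s) U := by
  intro s₀ hs₀
  obtain ⟨V, hV, u, hu, hle⟩ := hT s₀ hs₀
  obtain ⟨V', hV', u', hu', hle'⟩ := hT' s₀ hs₀
  exact ⟨V ∩ V', inter_mem hV hV', fun i => u i + u' i, hu.add hu',
    fun i s hs => (norm_add_le _ _).trans (add_le_add (hle i s hs.1) (hle' i s hs.2))⟩

lemma mul_left (hT : LocallyDominatedOn T U) {f : ℂ → ℂ} (hf : Continuous f) :
    LocallyDominatedOn (fun i s => f s * T i s) U := by
  intro s₀ hs₀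
  obtain ⟨V, hV, u, hu, hle⟩ := hT s₀ hs₀
  have hf_bound : ∀ᶠ s in 𝓝 s₀, ‖f s‖ < ‖f s₀‖ + 1 :=
    hf.norm.continuousAt.eventually_lt_const (lt_add_one _)
  refine ⟨_, inter_mem hV hf_bound, fun i => (‖f s₀‖ + 1) * u i, hu.mul_left _, ?_⟩
  rintro i s ⟨hsV, hsf : ‖f s‖ < ‖f s₀‖ + 1⟩
  rw [norm_mul]
  exact mul_le_mul hsf.le (hle i s hsV) (norm_nonneg _) (by positivity)

lemma differentiableOn_tsum (hT : LocallyDominatedOn T U) (hU : IsOpen U)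
    (hd : ∀ i, DifferentiableOn ℂ (T i) U) :
    DifferentiableOn ℂ (fun s => ∑' i, T i s) U := by
  intro s₀ hs₀
  obtain ⟨V, hV, u, hu, hle⟩ := hT s₀ hs₀
  obtain ⟨W, hW, hWo, hsW⟩ := mem_nhds_iff.1 (inter_mem hV (hU.mem_nhds hs₀))
  have hdiff := Complex.differentiableOn_tsum_of_summable_norm hu
    (fun i => (hd i).mono fun z hz => (hW hz).2) hWo fun i w hw => hle i w (hW hw).1
  exact (hdiff.differentiableAt (hWo.mem_nhds hsW)).differentiableWithinAt

lemma tendstoLocallyUniformlyOn_tsum {T : ℕ → ℂ → ℂ} (hT : LocallyDominatedOn T U) :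
    TendstoLocallyUniformlyOn (fun (n : ℕ) (s : ℂ) => ∑ k ∈ Finset.range n, T k s)
      (fun s => ∑' k, T k s) atTop U := by
  intro w hw s₀ hs₀
  obtain ⟨V, hV, u, hu, hle⟩ := hT s₀ hs₀
  exact ⟨V, mem_nhdsWithin_of_mem_nhds hV, tendstoUniformlyOn_tsum_nat hu hle w hw⟩

end LocallyDominatedOn

end LocallyDominatedSeries

section MeromorphicContinuation

lemma eventuallyEq_nhdsNE_of_eqOn_isOpen {f g : ℂ → ℂ} {U V : Set ℂ} (hU : IsPreconnected U)
    (hf : MeromorphicOn f U) (hg : MeromorphicOn g U) (hVo : IsOpen V) (hVU : V ⊆ U)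
    (hVn : V.Nonempty) (hfg : Set.EqOn f g V) {z : ℂ} (hz : z ∈ U) : f =ᶠ[𝓝[≠] z] g := by
  obtain ⟨v, hv⟩ := hVn
  have order_at_v : meromorphicOrderAt (f - g) v = ⊤ := by
    rw [meromorphicOrderAt_eq_top_iff]
    apply mem_nhdsWithin_of_mem_nhds
    filter_upwards [hVo.mem_nhds hv] with w hw
    simp [hfg hw]
  have order_at_z : meromorphicOrderAt (f - g) z = ⊤ := by
    by_contra hne
    exact (hf.sub hg).meromorphicOrderAt_ne_top_of_isPreconnected hU hz (hVU hv) hne order_at_v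
  filter_upwards [meromorphicOrderAt_eq_top_iff.1 order_at_z] with w hw
  simpa [sub_eq_zero] using hw

lemma eq_of_eventuallyEq_nhdsNE_of_continuousAt {f g : ℂ → ℂ} {z : ℂ} (hf : ContinuousAt f z)
    (hg : ContinuousAt g z) (hfg : f =ᶠ[𝓝[≠] z] g) : f z = g z :=
  tendsto_nhds_unique ((hf.tendsto.mono_left nhdsWithin_le_nhds).congr' hfg)
    (hg.tendsto.mono_left nhdsWithin_le_nhds)

lemma eventuallyEq_nhds_of_meromorphicNFAt {f g : ℂ → ℂ} {z : ℂ} (hf : MeromorphicNFAt f z)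
    (hg : AnalyticAt ℂ g z) (hfg : f =ᶠ[𝓝[≠] z] g) : f =ᶠ[𝓝 z] g :=
  (hf.eventuallyEq_nhdsNE_iff_eventuallyEq_nhds hg.meromorphicNFAt).1 hfg

variable {ι : Type*} {D : ι → Set ℂ} {f : ι → ℂ → ℂ} {V : Set ℂ}

lemma exists_meromorphicNFAt_eventuallyEq_of_cover (hVo : IsOpen V) (hVn : V.Nonempty)
    (hDo : ∀ i, IsOpen (D i)) (hDc : ∀ i, Convex ℝ (D i)) (hVD : ∀ i, V ⊆ D i)
    (hf : ∀ i, MeromorphicOn (f i) (D i)) (hfV : ∀ i j, Set.EqOn (f i) (f j) V)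
    (hcov : ∀ z, ∃ i, z ∈ D i) :
    ∃ F : ℂ → ℂ, (∀ z, MeromorphicNFAt F z) ∧ ∀ i, ∀ z ∈ D i, F =ᶠ[𝓝[≠] z] f i := by
  choose n hn using hcov
  let F : ℂ → ℂ := fun z => toMeromorphicNFAt (f (n z)) z z
  have F_eq : ∀ i, ∀ w ∈ D i, F w = toMeromorphicNFAt (f i) w w := by
    intro i w hw
    have : f (n w) =ᶠ[𝓝[≠] w] f i :=
      eventuallyEq_nhdsNE_of_eqOn_isOpen ((hDc _).inter (hDc _)).isPreconnected
        ((hf _).mono_set Set.inter_subset_left) ((hf _).mono_set Set.inter_subset_right) hVo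
        (Set.subset_inter (hVD _) (hVD _)) hVn (hfV _ _) ⟨hn w, hw⟩
    exact (toMeromorphicNFAt_eventuallyEq_nhds_congr this).self_of_nhds
  have F_eventuallyEq : ∀ i, ∀ z ∈ D i, F =ᶠ[𝓝[≠] z] f i := by
    intro i z hz
    filter_upwards [(hf i z hz).eventually_analyticAt,
      mem_nhdsWithin_of_mem_nhds ((hDo i).mem_nhds hz)] with w hw hwD
    rw [F_eq i w hwD, toMeromorphicNFAt_eq_self.2 hw.meromorphicNFAt]
  refine ⟨F, fun z => ?_, F_eventuallyEq⟩
  have : F =ᶠ[𝓝 z] toMeromorphicNFAt (f (n z)) z :=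
    eventuallyEq_nhds_of_eventuallyEq_nhdsNE
      ((F_eventuallyEq _ z (hn z)).trans (hf _ z (hn z)).eq_nhdsNE_toMeromorphicNFAt)
      (F_eq _ z (hn z))
  exact (meromorphicNFAt_congr this).2 meromorphicNFAt_toMeromorphicNFAt

end MeromorphicContinuation

section BinomialSeries

lemma ascPochhammer_eval_eq_prod {K : Type*} [CommSemiring K] (s : K) (j : ℕ) :
    (ascPochhammer K j).eval s = ∏ i ∈ Finset.range j, (s + i) := by
  induction j with
  | zero => simp
  | succ j ih => rw [ascPochhammer_succ_eval, ih, Finset.prod_range_succ]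

lemma multichoose_eq_prod_div_factorial {K : Type*} [Field K] [CharZero K] [BinomialRing K]
    (s : K) (j : ℕ) :
    Ring.multichoose s j = (∏ i ∈ Finset.range j, (s + i)) / j.factorial := by
  rw [eq_div_iff (by exact_mod_cast j.factorial_ne_zero), mul_comm, ← nsmul_eq_mul,
    Ring.factorial_nsmul_multichoose_eq_ascPochhammer, Polynomial.ascPochhammer_smeval_eq_eval,
    ascPochhammer_eval_eq_prod]

lemma differentiable_multichoose (j : ℕ) : Differentiable ℂ fun s : ℂ => Ring.multichoose s j := by
  simp only [multichoose_eq_prod_div_factorial]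
  fun_prop

lemma multichoose_nonneg {R : ℝ} (hR : 0 ≤ R) (j : ℕ) : 0 ≤ Ring.multichoose R j := by
  rw [multichoose_eq_prod_div_factorial]
  positivity

lemma norm_multichoose_le (s : ℂ) {R : ℝ} (hR : ‖s‖ ≤ R) (j : ℕ) :
    ‖Ring.multichoose s j‖ ≤ Ring.multichoose R j := by
  simp only [multichoose_eq_prod_div_factorial, norm_div, norm_prod, RCLike.norm_natCast]
  gcongr with i
  calc ‖s + i‖ ≤ ‖s‖ + ‖(i : ℂ)‖ := norm_add_le _ _
    _ ≤ R + i := by simpa using hR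

lemma hasSum_multichoose_mul_pow (s : ℂ) {z : ℂ} (hz : ‖z‖ < 1) :
    HasSum (fun j => Ring.multichoose s j * z ^ j) ((1 - z) ^ (-s)) := by
  have := (Complex.one_div_one_sub_cpow_hasFPowerSeriesOnBall_zero s).hasSum (y := z)
    (by simpa [← ofReal_norm, enorm_eq_nnnorm] using hz)
  simpa [Ring.multichoose_eq, FormalMultilinearSeries.ofScalars, Complex.cpow_neg, mul_comm]
    using this

lemma summable_multichoose_mul_quarter_pow (R : ℝ) :
    Summable fun j => Ring.multichoose R j * (1 / 4 : ℝ) ^ j := by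
  have := (hasSum_multichoose_mul_pow (R : ℂ) (z := 1 / 4) (by norm_num)).summable
  rw [← Complex.summable_ofReal]
  refine this.congr fun j => ?_
  simp [multichoose_eq_prod_div_factorial]

end BinomialSeries

section TruncatedMoments

/-- The upper truncated Mellin transform of `ψ`, in the exponent normalisation `x ^ (-2 t)`
dictated by the powers of `x ^ 2 - 1 / 4`. -/
noncomputable def tailMoment (ψ : ℝ → ℝ) (y : ℝ) (t : ℂ) : ℂ :=
  ∫ x in Set.Ioi y, (x : ℂ) ^ (-2 * t) * (ψ x : ℂ)

/-- The lower truncated Mellin transform of `ψ`, complementary to `tailMoment`. -/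
noncomputable def headMoment (ψ : ℝ → ℝ) (y : ℝ) (t : ℂ) : ℂ :=
  ∫ x in Set.Ioc 0 y, (x : ℂ) ^ (-2 * t) * (ψ x : ℂ)

variable {ψ : ℝ → ℝ} {A r y : ℝ} {t : ℂ}

lemma norm_cpow_neg_two_mul {x : ℝ} (hx : 0 < x) (t : ℂ) :
    ‖(x : ℂ) ^ (-2 * t)‖ = x ^ (-2 * t.re) := by
  simp [Complex.norm_cpow_eq_rpow_re_of_pos hx]

lemma norm_cpow_neg_two_mul_mul_le (hA : ∀ x, 0 < x → |ψ x| ≤ A * x ^ r) {x : ℝ} (hx : 0 < x) :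
    ‖(x : ℂ) ^ (-2 * t) * (ψ x : ℂ)‖ ≤ A * x ^ (r - 2 * t.re) := by
  calc ‖(x : ℂ) ^ (-2 * t) * (ψ x : ℂ)‖ = x ^ (-2 * t.re) * |ψ x| := by
        rw [norm_mul, norm_cpow_neg_two_mul hx, Complex.norm_real, Real.norm_eq_abs]
    _ ≤ x ^ (-2 * t.re) * (A * x ^ r) := by gcongr; exact hA x hx
    _ = A * x ^ (r - 2 * t.re) := by
        rw [mul_left_comm, ← Real.rpow_add hx]; ring_nf

lemma aestronglyMeasurable_cpow_mul (hψ : Continuous ψ) (t : ℂ) (μ : Measure ℝ) :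
    AEStronglyMeasurable (fun x : ℝ => (x : ℂ) ^ t * (ψ x : ℂ)) μ := by
  have := hψ.measurable
  exact Measurable.aestronglyMeasurable (by fun_prop)

lemma integrableOn_Ioi_cpow_mul (hψ : Continuous ψ) (hA : ∀ x, 0 < x → |ψ x| ≤ A * x ^ r)
    (hy : 0 < y) (ht : r + 1 < 2 * t.re) :
    IntegrableOn (fun x : ℝ => (x : ℂ) ^ (-2 * t) * (ψ x : ℂ)) (Set.Ioi y) := by
  refine Integrable.mono' ((integrableOn_Ioi_rpow_of_lt (a := r - 2 * t.re) (by linarith)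
    hy).const_mul A) (aestronglyMeasurable_cpow_mul hψ _ _) ?_
  filter_upwards [ae_restrict_mem measurableSet_Ioi] with x hx
  exact norm_cpow_neg_two_mul_mul_le hA (hy.trans hx)

lemma norm_tailMoment_le (hA : ∀ x, 0 < x → |ψ x| ≤ A * x ^ r) (hy : 0 < y)
    (ht : r + 1 < 2 * t.re) :
    ‖tailMoment ψ y t‖ ≤ A * (y ^ (r + 1 - 2 * t.re) / (2 * t.re - (r + 1))) := by
  calc ‖tailMoment ψ y t‖ ≤ ∫ x in Set.Ioi y, A * x ^ (r - 2 * t.re) := by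
        refine norm_integral_le_of_norm_le
          ((integrableOn_Ioi_rpow_of_lt (by linarith) hy).const_mul A) ?_
        filter_upwards [ae_restrict_mem measurableSet_Ioi] with x hx
        exact norm_cpow_neg_two_mul_mul_le hA (hy.trans hx)
    _ = A * (y ^ (r + 1 - 2 * t.re) / (2 * t.re - (r + 1))) := by
        rw [integral_const_mul, integral_Ioi_rpow_of_lt (by linarith) hy, neg_div, ← div_neg]
        ring_nf

lemma integrableOn_Ioc_zero_rpow {e : ℝ} (he : -1 < e) (y : ℝ) :
    IntegrableOn (fun x : ℝ => x ^ e) (Set.Ioc 0 y) :=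
  (intervalIntegral.intervalIntegrable_rpow' he).1

lemma integrableOn_Ioc_cpow_mul (hψ : Continuous ψ) (hA : ∀ x, 0 < x → |ψ x| ≤ A * x ^ r)
    (ht : 2 * t.re < r + 1) :
    IntegrableOn (fun x : ℝ => (x : ℂ) ^ (-2 * t) * (ψ x : ℂ)) (Set.Ioc 0 y) := by
  refine Integrable.mono' ((integrableOn_Ioc_zero_rpow (e := r - 2 * t.re) (by linarith)
    y).const_mul A) (aestronglyMeasurable_cpow_mul hψ _ _) ?_
  filter_upwards [ae_restrict_mem measurableSet_Ioc] with x hx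
  exact norm_cpow_neg_two_mul_mul_le hA hx.1

lemma norm_headMoment_le (hA : ∀ x, 0 < x → |ψ x| ≤ A * x ^ r) (hy : 0 < y)
    (ht : 2 * t.re < r + 1) :
    ‖headMoment ψ y t‖ ≤ A * (y ^ (r + 1 - 2 * t.re) / (r + 1 - 2 * t.re)) := by
  calc ‖headMoment ψ y t‖ ≤ ∫ x in Set.Ioc 0 y, A * x ^ (r - 2 * t.re) := by
        refine norm_integral_le_of_norm_le
          ((integrableOn_Ioc_zero_rpow (by linarith) y).const_mul A) ?_
        filter_upwards [ae_restrict_mem measurableSet_Ioc] with x hx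
        exact norm_cpow_neg_two_mul_mul_le hA hx.1
    _ = A * (y ^ (r + 1 - 2 * t.re) / (r + 1 - 2 * t.re)) := by
        rw [integral_const_mul, ← intervalIntegral.integral_of_le hy.le,
          integral_rpow (Or.inl (by linarith)), Real.zero_rpow (by linarith), sub_zero,
          sub_add_eq_add_sub]

lemma headMoment_add_tailMoment (hy : 0 ≤ y)
    (hint : IntegrableOn (fun x : ℝ => (x : ℂ) ^ (-2 * t) * (ψ x : ℂ)) (Set.Ioi 0)) :
    headMoment ψ y t + tailMoment ψ y t =
      ∫ x in Set.Ioi (0 : ℝ), (x : ℂ) ^ (-2 * t) * (ψ x : ℂ) := by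
  rw [headMoment, tailMoment, ← Set.Ioc_union_Ioi_eq_Ioi hy,
    setIntegral_union (Set.Ioc_disjoint_Ioi le_rfl) measurableSet_Ioi
      (hint.mono_set Set.Ioc_subset_Ioi_self) (hint.mono_set (Set.Ioi_subset_Ioi hy))]

lemma mellin_indicator_one_sub_two_mul {S : Set ℝ} (hS : MeasurableSet S) (hS0 : S ⊆ Set.Ioi 0)
    (ψ : ℝ → ℝ) (t : ℂ) :
    mellin (S.indicator fun x => (ψ x : ℂ)) (1 - 2 * t) =
      ∫ x in S, (x : ℂ) ^ (-2 * t) * (ψ x : ℂ) := by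
  have hind : ∀ x : ℝ, (x : ℂ) ^ (1 - 2 * t - 1) • S.indicator (fun x => (ψ x : ℂ)) x =
      S.indicator (fun x : ℝ => (x : ℂ) ^ (-2 * t) * (ψ x : ℂ)) x := fun x => by
    rw [smul_eq_mul, ← Set.indicator_mul_right S fun x : ℝ => (x : ℂ) ^ (1 - 2 * t - 1),
      show 1 - 2 * t - 1 = -2 * t by ring]
  simp only [mellin, hind]
  rw [setIntegral_indicator hS, Set.inter_eq_right.2 hS0]

lemma locallyIntegrableOn_indicator_ofReal (hψ : Continuous ψ) {S : Set ℝ}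
    (hS : MeasurableSet S) :
    LocallyIntegrableOn (S.indicator fun x => (ψ x : ℂ)) (Set.Ioi 0) :=
  ((Complex.continuous_ofReal.comp hψ).locallyIntegrable.indicator hS).locallyIntegrableOn _

lemma norm_indicator_ofReal_le (hA : ∀ x, 0 < x → |ψ x| ≤ A * x ^ r) (S : Set ℝ) {x : ℝ}
    (hx : 0 < x) : ‖S.indicator (fun x => (ψ x : ℂ)) x‖ ≤ A * ‖x ^ r‖ := by
  refine (norm_indicator_le_norm_self _ _).trans ?_
  rw [Complex.norm_real, Real.norm_eq_abs, Real.norm_of_nonneg (by positivity)]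
  exact hA x hx

lemma differentiableAt_tailMoment (hψ : Continuous ψ) (hA : ∀ x, 0 < x → |ψ x| ≤ A * x ^ r)
    (hy : 0 < y) (ht : r + 1 < 2 * t.re) : DifferentiableAt ℂ (tailMoment ψ y) t := by
  have hmellin : tailMoment ψ y =
      mellin ((Set.Ioi y).indicator fun x => (ψ x : ℂ)) ∘ fun t => 1 - 2 * t :=
    funext fun t => (mellin_indicator_one_sub_two_mul measurableSet_Ioi
      (Set.Ioi_subset_Ioi hy.le) ψ t).symm
  have htop : ((Set.Ioi y).indicator fun x => (ψ x : ℂ)) =O[atTop] (· ^ (-(-r))) := by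
    refine Asymptotics.IsBigO.of_bound A ?_
    filter_upwards [eventually_gt_atTop 0] with x hx
    simpa using norm_indicator_ofReal_le hA (Set.Ioi y) hx
  have hbot : ((Set.Ioi y).indicator fun x => (ψ x : ℂ)) =O[𝓝[>] 0]
      (· ^ (-(-2 * t.re))) := by
    refine Asymptotics.IsBigO.of_bound 0 ?_
    filter_upwards [nhdsWithin_le_nhds (Iio_mem_nhds hy)] with x hx
    simp [Set.indicator_of_notMem (Set.notMem_Ioi.2 (Set.mem_Iio.1 hx).le)]
  have hdiff : DifferentiableAt ℂ (mellin ((Set.Ioi y).indicator fun x => (ψ x : ℂ)))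
      (1 - 2 * t) := by
    refine mellin_differentiableAt_of_isBigO_rpow
      (locallyIntegrableOn_indicator_ofReal hψ measurableSet_Ioi) htop ?_ hbot ?_
    · simp; linarith
    · simp
  rw [hmellin]
  exact hdiff.comp t (by fun_prop)

lemma differentiableAt_headMoment (hψ : Continuous ψ) (hA : ∀ x, 0 < x → |ψ x| ≤ A * x ^ r)
    (ht : 2 * t.re < r + 1) : DifferentiableAt ℂ (headMoment ψ y) t := by
  have hmellin : headMoment ψ y =
      mellin ((Set.Ioc 0 y).indicator fun x => (ψ x : ℂ)) ∘ fun t => 1 - 2 * t :=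
    funext fun t => (mellin_indicator_one_sub_two_mul measurableSet_Ioc
      Set.Ioc_subset_Ioi_self ψ t).symm
  have htop : ((Set.Ioc 0 y).indicator fun x => (ψ x : ℂ)) =O[atTop]
      (· ^ (-(2 - 2 * t.re))) := by
    refine Asymptotics.IsBigO.of_bound 0 ?_
    filter_upwards [eventually_gt_atTop y] with x hx
    simp [Set.indicator_of_notMem fun h : x ∈ Set.Ioc 0 y => hx.not_ge h.2]
  have hbot : ((Set.Ioc 0 y).indicator fun x => (ψ x : ℂ)) =O[𝓝[>] 0] (· ^ (-(-r))) := by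
    refine Asymptotics.IsBigO.of_bound A ?_
    filter_upwards [self_mem_nhdsWithin] with x hx
    simpa using norm_indicator_ofReal_le hA (Set.Ioc 0 y) hx
  have hdiff : DifferentiableAt ℂ (mellin ((Set.Ioc 0 y).indicator fun x => (ψ x : ℂ)))
      (1 - 2 * t) := by
    refine mellin_differentiableAt_of_isBigO_rpow
      (locallyIntegrableOn_indicator_ofReal hψ measurableSet_Ioc) htop ?_ hbot ?_
    · simp
    · simp; linarith
  rw [hmellin]
  exact hdiff.comp t (by fun_prop)

end TruncatedMoments

section QuarterShiftedKernel

lemma hasSum_sq_sub_quarter_cpow {x : ℝ} (hx : 1 ≤ x) (s : ℂ) :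
    HasSum (fun j : ℕ => Ring.multichoose s j * (1 / 4) ^ j * (x : ℂ) ^ (-2 * (s + j)))
      (((x ^ 2 - 1 / 4 : ℝ) : ℂ) ^ (-s)) := by
  have hx0 : (x : ℂ) ≠ 0 := by exact_mod_cast (by linarith : x ≠ 0)
  obtain ⟨z, hz⟩ : ∃ z : ℝ, z = 1 / (4 * x ^ 2) := ⟨_, rfl⟩
  have hz0 : 0 ≤ z := hz ▸ by positivity
  have hz1 : z < 1 := by
    rw [hz, div_lt_one (by positivity)]; nlinarith
  have hfactor : ((x ^ 2 - 1 / 4 : ℝ) : ℂ) ^ (-s) = (x : ℂ) ^ (-2 * s) * (1 - z : ℂ) ^ (-s) := by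
    rw [show x ^ 2 - 1 / 4 = x * x * (1 - z) by rw [hz]; field_simp, Complex.ofReal_mul,
      Complex.mul_cpow_ofReal_nonneg (by positivity) (by linarith), Complex.ofReal_mul,
      Complex.mul_cpow_ofReal_nonneg (by linarith) (by linarith), ← Complex.cpow_add _ _ hx0]
    push_cast
    ring_nf
  have hterm : ∀ j : ℕ, Ring.multichoose s j * (1 / 4) ^ j * (x : ℂ) ^ (-2 * (s + j)) =
      (x : ℂ) ^ (-2 * s) * (Ring.multichoose s j * (z : ℂ) ^ j) := fun j => by
    rw [show -2 * (s + j) = -2 * s - (2 * j : ℕ) by push_cast; ring, Complex.cpow_sub _ _ hx0,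
      Complex.cpow_natCast, hz, pow_mul]
    push_cast
    simp only [mul_inv, mul_pow, inv_pow, div_eq_mul_inv]
    ring
  simp only [hfactor, hterm]
  exact (hasSum_multichoose_mul_pow s (by simpa [abs_of_nonneg hz0])).mul_left _

variable {ψ : ℝ → ℝ} {A y : ℝ} {s : ℂ}

lemma norm_multichoose_mul_cpow_mul_le (hA : ∀ x, 0 < x → |ψ x| ≤ A * x) (s : ℂ) (j : ℕ) {x : ℝ}
    (hx : 1 ≤ x) :
    ‖Ring.multichoose s j * (1 / 4) ^ j * ((x : ℂ) ^ (-2 * (s + j)) * (ψ x : ℂ))‖ ≤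
      Ring.multichoose ‖s‖ j * (1 / 4) ^ j * (A * x ^ (1 - 2 * s.re)) := by
  have hA0 : 0 ≤ A := by simpa using (abs_nonneg _).trans (hA 1 one_pos)
  have hmc := multichoose_nonneg (norm_nonneg s) j
  have hψ : ‖(x : ℂ) ^ (-2 * (s + j)) * (ψ x : ℂ)‖ ≤ A * x ^ (1 - 2 * s.re) := by
    refine (norm_cpow_neg_two_mul_mul_le (r := 1) (by simpa using hA) (by linarith)).trans ?_
    exact mul_le_mul_of_nonneg_left (Real.rpow_le_rpow_of_exponent_le hx
      (by simp; linarith [j.cast_nonneg (α := ℝ)])) hA0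
  rw [norm_mul, norm_mul, norm_pow, norm_div, norm_one, Complex.norm_ofNat]
  gcongr
  exact norm_multichoose_le s le_rfl j

lemma hasSum_multichoose_mul_tailMoment (hψ : Continuous ψ) (hA : ∀ x, 0 < x → |ψ x| ≤ A * x)
    (hy : 1 ≤ y) (hs : 1 < s.re) :
    HasSum (fun j : ℕ => Ring.multichoose s j * (1 / 4) ^ j * tailMoment ψ y (s + j))
      (∫ x in Set.Ioi y, ((x ^ 2 - 1 / 4 : ℝ) : ℂ) ^ (-s) * (ψ x : ℂ)) := by
  have hy0 : 0 < y := by linarith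
  have hint : ∀ j : ℕ, IntegrableOn (fun x : ℝ => Ring.multichoose s j * (1 / 4) ^ j *
      ((x : ℂ) ^ (-2 * (s + j)) * (ψ x : ℂ))) (Set.Ioi y) := fun j =>
    (integrableOn_Ioi_cpow_mul (r := 1) hψ (by simpa using hA) hy0
      (by simp; linarith [j.cast_nonneg (α := ℝ)])).const_mul _
  have hdom : IntegrableOn (fun x : ℝ => A * x ^ (1 - 2 * s.re)) (Set.Ioi y) :=
    (integrableOn_Ioi_rpow_of_lt (by linarith) hy0).const_mul A
  have hsum := hasSum_integral_of_summable_integral_norm hint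
    (((summable_multichoose_mul_quarter_pow ‖s‖).mul_right
      (∫ x in Set.Ioi y, A * x ^ (1 - 2 * s.re))).of_nonneg_of_le
        (fun j => integral_nonneg fun x => norm_nonneg _) fun j => ?_)
  · simp only [integral_const_mul] at hsum
    rwa [setIntegral_congr_fun measurableSet_Ioi fun x hx => by
      simpa only [mul_assoc] using ((hasSum_sq_sub_quarter_cpow (hy.trans (le_of_lt hx))
        s).mul_right (ψ x : ℂ)).tsum_eq] at hsum
  · rw [← integral_const_mul]
    exact setIntegral_mono_on (hint j).norm (hdom.const_mul _) measurableSet_Ioi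
      fun x hx => norm_multichoose_mul_cpow_mul_le hA s j (hy.trans (le_of_lt hx))

end QuarterShiftedKernel

section MellinDensity

/-- The coefficient of `u ^ (m + 1)` in the Taylor expansion of `φ` at `0`; the constant term is
omitted because the densities considered here vanish at `0`. -/
noncomputable def taylorCoeff (φ : ℝ → ℝ) (m : ℕ) : ℝ :=
  iteratedDeriv (m + 1) φ 0 / (m + 1).factorial

/-- What is left of `φ` after subtracting its Taylor polynomial of degree `N` at `0`. -/
noncomputable def taylorRemainder (φ : ℝ → ℝ) (N : ℕ) (u : ℝ) : ℝ :=
  φ u - ∑ m ∈ Finset.range N, taylorCoeff φ m * u ^ (m + 1)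

/-- `φ` is a smooth function on the half-line vanishing at `0` and of at most square-root growth,
and `M` is a meromorphic continuation of its Mellin transform `t ↦ ∫ v ^ (-2 t) φ(v) dv`, which
converges absolutely for `3 / 4 < t.re < 1`. -/
structure MellinDensity (φ : ℝ → ℝ) (M : ℂ → ℂ) : Prop where
  contDiff : ∀ n : ℕ, ContDiff ℝ n φ
  map_zero : φ 0 = 0
  exists_abs_le_sqrt : ∃ A, ∀ u, 0 < u → |φ u| ≤ A * u ^ (1 / 2 : ℝ)
  meromorphic : Meromorphic M
  mellin_eq : ∀ t : ℂ, 3 / 4 < t.re → t.re < 1 →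
    ∫ v in Set.Ioi (0 : ℝ), (v : ℂ) ^ (-2 * t) * (φ v : ℂ) = M t
  differentiableOn : DifferentiableOn ℂ M {t | 1 < t.re ∧ t.re < 3 / 2}

lemma exists_abs_taylorRemainder_le_on_unit {φ : ℝ → ℝ} (hφ : ∀ n : ℕ, ContDiff ℝ n φ)
    (h0 : φ 0 = 0) (N : ℕ) :
    ∃ C, ∀ u, 0 < u → u ≤ 1 → |taylorRemainder φ N u| ≤ C * u ^ (N + 1) := by
  obtain ⟨C, hC⟩ := exists_taylor_mean_remainder_bound (f := φ) (n := N) zero_le_one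
    (by exact_mod_cast (hφ (N + 1)).contDiffOn)
  refine ⟨C, fun u hu hu1 => ?_⟩
  have hderiv : ∀ m, iteratedDerivWithin m φ (Set.Icc 0 1) 0 = iteratedDeriv m φ 0 := fun m =>
    iteratedDerivWithin_eq_iteratedDeriv (uniqueDiffOn_Icc one_pos) (hφ m).contDiffAt
      (Set.left_mem_Icc.2 zero_le_one)
  have hpoly : taylorWithinEval φ N (Set.Icc 0 1) 0 u =
      ∑ m ∈ Finset.range N, taylorCoeff φ m * u ^ (m + 1) := by
    rw [taylor_within_apply, Finset.sum_range_succ']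
    simp only [hderiv, iteratedDeriv_zero, h0, smul_eq_mul, mul_zero, add_zero, sub_zero]
    exact Finset.sum_congr rfl fun m _ => by rw [taylorCoeff]; ring
  simpa [hpoly, taylorRemainder] using hC u ⟨hu.le, hu1⟩

lemma abs_comp_div_le {g : ℝ → ℝ} {C r c : ℝ} (hg : ∀ u, 0 < u → |g u| ≤ C * u ^ r)
    (hc : 0 < c) : ∀ x, 0 < x → |g (x / c)| ≤ C / c ^ r * x ^ r := fun x hx => by
  refine (hg _ (div_pos hx hc)).trans_eq ?_
  rw [Real.div_rpow hx.le hc.le]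
  ring

lemma integrableOn_Ioc_cpow_mul_pow {t : ℂ} (ht : t.re < 1) (y : ℝ) (m : ℕ) :
    IntegrableOn (fun x : ℝ => (x : ℂ) ^ (-2 * t) * ((x ^ (m + 1) : ℝ) : ℂ)) (Set.Ioc 0 y) :=
  integrableOn_Ioc_cpow_mul (A := 1) (r := m + 1) (by fun_prop)
    (fun x hx => by rw [abs_of_pos (by positivity), one_mul]; exact_mod_cast le_rfl)
    (by linarith [m.cast_nonneg (α := ℝ)])

lemma headMoment_pow {y : ℝ} (hy : 0 ≤ y) {t : ℂ} (ht : t.re < 1) (m : ℕ) :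
    headMoment (fun x => x ^ (m + 1)) y t = (y : ℂ) ^ (m + 2 - 2 * t) / (m + 2 - 2 * t) := by
  have hre : -1 < (m + 1 - 2 * t : ℂ).re := by
    simp only [Complex.sub_re, Complex.add_re, Complex.natCast_re, Complex.one_re, Complex.mul_re,
      Complex.re_ofNat, Complex.im_ofNat, zero_mul, sub_zero]
    linarith [m.cast_nonneg (α := ℝ)]
  have hne : (m + 1 - 2 * t + 1 : ℂ) ≠ 0 := fun h => by
    have := congrArg Complex.re h
    simp only [Complex.add_re, Complex.one_re, Complex.zero_re] at this
    linarith
  have hexp : ∀ x ∈ Set.Ioc 0 y, (x : ℂ) ^ (-2 * t) * ((x ^ (m + 1) : ℝ) : ℂ) =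
      (x : ℂ) ^ (m + 1 - 2 * t : ℂ) := fun x hx => by
    rw [Complex.ofReal_pow, ← Complex.cpow_natCast,
      ← Complex.cpow_add _ _ (by exact_mod_cast hx.1.ne')]
    push_cast
    ring_nf
  rw [headMoment, setIntegral_congr_fun measurableSet_Ioc hexp,
    ← intervalIntegral.integral_of_le hy, integral_cpow (Or.inl hre)]
  rw [Complex.ofReal_zero, Complex.zero_cpow hne, sub_zero]
  ring_nf

lemma isOpen_re_strip (α β : ℝ) : IsOpen {t : ℂ | α < t.re ∧ t.re < β} :=
  isOpen_Ioo.preimage Complex.continuous_re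

lemma natCast_add_two_sub_ne_zero {t : ℂ} (ht : 1 < t.re) (ht' : t.re < 3 / 2) (m : ℕ) :
    (m + 2 - 2 * t : ℂ) ≠ 0 := fun h => by
  have hre : (m : ℝ) + 2 - 2 * t.re = 0 := by simpa using congrArg Complex.re h
  have hpos : (0 : ℝ) < m := by linarith
  have hlt : (m : ℝ) < 1 := by linarith
  norm_cast at hpos hlt
  omega

namespace MellinDensity

variable {φ : ℝ → ℝ} {M : ℂ → ℂ} {c y : ℝ} {t : ℂ}

lemma continuous (h : MellinDensity φ M) : Continuous φ := (h.contDiff 0).continuous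

lemma continuous_taylorRemainder (h : MellinDensity φ M) (N : ℕ) :
    Continuous (taylorRemainder φ N) := by
  have := h.continuous
  unfold taylorRemainder
  fun_prop

lemma exists_abs_taylorRemainder_le (h : MellinDensity φ M) (N : ℕ) :
    ∃ C, ∀ u, 0 < u → |taylorRemainder φ N u| ≤ C * u ^ (N + 1 : ℝ) := by
  obtain ⟨C, hC⟩ := exists_abs_taylorRemainder_le_on_unit h.contDiff h.map_zero N
  obtain ⟨A, hA⟩ := h.exists_abs_le_sqrt
  have hA0 : 0 ≤ A := by simpa using (abs_nonneg _).trans (hA 1 one_pos)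
  refine ⟨max C (A + ∑ m ∈ Finset.range N, |taylorCoeff φ m|), fun u hu => ?_⟩
  rcases le_total u 1 with hu1 | hu1
  · refine (hC u hu hu1).trans ?_
    exact_mod_cast mul_le_mul_of_nonneg_right (le_max_left _ _) (by positivity)
  refine le_trans ?_ (mul_le_mul_of_nonneg_right (le_max_right _ _) (by positivity))
  rw [add_mul, Finset.sum_mul]
  refine (abs_sub _ _).trans (add_le_add ?_ ?_)
  · refine (hA u hu).trans (mul_le_mul_of_nonneg_left ?_ hA0)
    exact Real.rpow_le_rpow_of_exponent_le hu1 (by linarith [N.cast_nonneg (α := ℝ)])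
  · refine (Finset.abs_sum_le_sum_abs _ _).trans (Finset.sum_le_sum fun m hm => ?_)
    rw [abs_mul, abs_of_pos (pow_pos hu _)]
    refine mul_le_mul_of_nonneg_left ?_ (abs_nonneg _)
    exact_mod_cast pow_le_pow_right₀ hu1 (Nat.succ_le_succ (Finset.mem_range.1 hm).le)

lemma exists_abs_le (h : MellinDensity φ M) : ∃ A, ∀ u, 0 < u → |φ u| ≤ A * u := by
  simpa [taylorRemainder] using h.exists_abs_taylorRemainder_le 0

lemma integrableOn_Ioi_comp_div (h : MellinDensity φ M) (hc : 0 < c) (ht : 3 / 4 < t.re)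
    (ht1 : t.re < 1) :
    IntegrableOn (fun x : ℝ => (x : ℂ) ^ (-2 * t) * (φ (x / c) : ℂ)) (Set.Ioi 0) := by
  obtain ⟨A, hA⟩ := h.exists_abs_le
  obtain ⟨B, hB⟩ := h.exists_abs_le_sqrt
  have hφ : Continuous fun x => φ (x / c) := h.continuous.comp (continuous_id.div_const c)
  rw [← Set.Ioc_union_Ioi_eq_Ioi zero_le_one]
  exact (integrableOn_Ioc_cpow_mul (r := 1) hφ
      (abs_comp_div_le (by simpa using hA) hc) (by linarith)).union
    (integrableOn_Ioi_cpow_mul hφ (abs_comp_div_le hB hc) one_pos (by linarith))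

lemma integral_Ioi_comp_div (h : MellinDensity φ M) (hc : 0 < c) (ht : 3 / 4 < t.re)
    (ht1 : t.re < 1) :
    ∫ x in Set.Ioi (0 : ℝ), (x : ℂ) ^ (-2 * t) * (φ (x / c) : ℂ) = (c : ℂ) ^ (1 - 2 * t) * M t := by
  have hmellin : ∀ f : ℝ → ℂ, mellin f (1 - 2 * t) =
      ∫ x in Set.Ioi (0 : ℝ), (x : ℂ) ^ (-2 * t) * f x := fun f => by
    simp only [mellin, smul_eq_mul, show 1 - 2 * t - 1 = -2 * t by ring]
  have hscale := mellin_comp_mul_left (fun x => (φ x : ℂ)) (1 - 2 * t) (inv_pos.2 hc)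
  rw [hmellin, hmellin, h.mellin_eq t ht ht1, smul_eq_mul] at hscale
  simp only [div_eq_inv_mul]
  have harg : (c : ℂ).arg ≠ Real.pi := by
    rw [Complex.arg_ofReal_of_nonneg hc.le]
    exact Real.pi_ne_zero.symm
  rw [hscale, Complex.ofReal_inv, Complex.inv_cpow _ _ harg, Complex.cpow_neg, inv_inv]

lemma headMoment_comp_div (h : MellinDensity φ M) (hc : 0 < c) (hy : 0 ≤ y) (ht1 : t.re < 1)
    (N : ℕ) :
    headMoment (fun x => φ (x / c)) y t =
      ∑ m ∈ Finset.range N, (taylorCoeff φ m / c ^ (m + 1) : ℂ) *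
        ((y : ℂ) ^ (m + 2 - 2 * t) / (m + 2 - 2 * t)) +
      headMoment (fun x => taylorRemainder φ N (x / c)) y t := by
  obtain ⟨C, hC⟩ := h.exists_abs_taylorRemainder_le N
  have hrem : IntegrableOn (fun x : ℝ => (x : ℂ) ^ (-2 * t) * (taylorRemainder φ N (x / c) : ℂ))
      (Set.Ioc 0 y) :=
    integrableOn_Ioc_cpow_mul ((h.continuous_taylorRemainder N).comp (continuous_id.div_const c))
      (abs_comp_div_le hC hc) (by linarith [N.cast_nonneg (α := ℝ)])
  have hpow := fun m (_ : m ∈ Finset.range N) =>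
    (integrableOn_Ioc_cpow_mul_pow ht1 y m).const_mul (taylorCoeff φ m / c ^ (m + 1) : ℂ)
  simp_rw [← headMoment_pow hy ht1]
  unfold headMoment
  simp_rw [← integral_const_mul]
  rw [← integral_finsetSum _ hpow, ← integral_add (integrable_finsetSum _ hpow) hrem]
  refine integral_congr_ae (Eventually.of_forall fun x => ?_)
  simp only [taylorRemainder]
  push_cast
  rw [mul_sub, Finset.mul_sum, ← add_sub_assoc, eq_sub_iff_add_eq, add_comm, add_left_inj]
  exact Finset.sum_congr rfl fun m _ => by rw [div_pow]; ring

/-- The meromorphic continuation of `t ↦ tailMoment (φ (· / c)) y t` obtained by subtracting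
the lower truncated transform, expanded to order `N`, from the full Mellin transform. -/
noncomputable def tailContinuation (φ : ℝ → ℝ) (M : ℂ → ℂ) (c y : ℝ) (N : ℕ) (t : ℂ) : ℂ :=
  (c : ℂ) ^ (1 - 2 * t) * M t -
    ∑ m ∈ Finset.range N, (taylorCoeff φ m / c ^ (m + 1) : ℂ) *
      ((y : ℂ) ^ (m + 2 - 2 * t) / (m + 2 - 2 * t)) -
    headMoment (fun x => taylorRemainder φ N (x / c)) y t

lemma tailMoment_eq_tailContinuation_of_re_lt_one (h : MellinDensity φ M) (hc : 0 < c)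
    (hy : 0 ≤ y) (N : ℕ) (ht : 3 / 4 < t.re) (ht1 : t.re < 1) :
    tailMoment (fun x => φ (x / c)) y t = tailContinuation φ M c y N t := by
  rw [tailContinuation, sub_sub, ← h.headMoment_comp_div hc hy ht1, eq_sub_iff_add_eq',
    headMoment_add_tailMoment hy (h.integrableOn_Ioi_comp_div hc ht ht1),
    h.integral_Ioi_comp_div hc ht ht1]

lemma differentiableAt_tailMoment_comp_div (h : MellinDensity φ M) (hc : 0 < c) (hy : 0 < y)
    (ht : 3 / 4 < t.re) : DifferentiableAt ℂ (tailMoment (fun x => φ (x / c)) y) t := by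
  obtain ⟨A, hA⟩ := h.exists_abs_le_sqrt
  exact differentiableAt_tailMoment (h.continuous.comp (continuous_id.div_const c))
    (abs_comp_div_le hA hc) hy (by linarith)

lemma differentiableAt_headMoment_taylorRemainder (h : MellinDensity φ M) (hc : 0 < c) {N : ℕ}
    (ht : t.re < N / 2 + 1) :
    DifferentiableAt ℂ (headMoment (fun x => taylorRemainder φ N (x / c)) y) t := by
  obtain ⟨C, hC⟩ := h.exists_abs_taylorRemainder_le N
  exact differentiableAt_headMoment
    ((h.continuous_taylorRemainder N).comp (continuous_id.div_const c))
    (abs_comp_div_le hC hc) (by linarith)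

lemma meromorphicOn_tailContinuation (h : MellinDensity φ M) (hc : 0 < c) (hy : 0 < y) (N : ℕ) :
    MeromorphicOn (tailContinuation φ M c y N) {t | t.re < N / 2 + 1} := by
  intro t ht
  have hopen : IsOpen {t : ℂ | t.re < N / 2 + 1} := isOpen_lt (by fun_prop) (by fun_prop)
  have hhead : AnalyticAt ℂ (headMoment (fun x => taylorRemainder φ N (x / c)) y) t :=
    DifferentiableOn.analyticAt (s := {t : ℂ | t.re < N / 2 + 1})
      (fun u hu => (h.differentiableAt_headMoment_taylorRemainder hc hu).differentiableWithinAt)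
      (hopen.mem_nhds ht)
  have hcpow : ∀ {b : ℝ}, 0 < b → ∀ f : ℂ → ℂ, AnalyticAt ℂ f t →
      AnalyticAt ℂ (fun t => (b : ℂ) ^ f t) t := fun hb f hf =>
    analyticAt_const.cpow hf (by simp [hb])
  refine MeromorphicAt.sub (MeromorphicAt.sub ?_ ?_) hhead.meromorphicAt
  · exact (hcpow hc _ (by fun_prop)).meromorphicAt.mul (h.meromorphic t)
  · refine MeromorphicAt.fun_sum fun m _ => (MeromorphicAt.const _ t).mul (MeromorphicAt.div ?_ ?_)
    · exact (hcpow hy _ (by fun_prop)).meromorphicAt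
    · exact AnalyticAt.meromorphicAt (by fun_prop)

lemma continuousAt_tailContinuation (h : MellinDensity φ M) (hc : 0 < c) (hy : 0 < y) {N : ℕ}
    (hN : 1 ≤ N) (ht : 1 < t.re) (ht' : t.re < 3 / 2) :
    ContinuousAt (tailContinuation φ M c y N) t := by
  have hM : ContinuousAt M t :=
    (h.differentiableOn.differentiableAt ((isOpen_re_strip _ _).mem_nhds ⟨ht, ht'⟩)).continuousAt
  have hN' : (1 : ℝ) ≤ N := by exact_mod_cast hN
  have hhead := (h.differentiableAt_headMoment_taylorRemainder (y := y) hc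
    (N := N) (by linarith : t.re < N / 2 + 1)).continuousAt
  have hcpow : ∀ {b : ℝ}, 0 < b → ∀ f : ℂ → ℂ, Continuous f →
      ContinuousAt (fun t => (b : ℂ) ^ f t) t := fun hb f hf =>
    hf.continuousAt.const_cpow (Or.inl (by exact_mod_cast hb.ne'))
  refine (((hcpow hc _ (by fun_prop)).mul hM).sub ?_).sub hhead
  exact tendsto_finsetSum _ fun m _ => continuousAt_const.mul
    ((hcpow hy _ (by fun_prop)).div (by fun_prop) (natCast_add_two_sub_ne_zero ht ht' m))

lemma tailMoment_eq_tailContinuation (h : MellinDensity φ M) (hc : 0 < c) (hy : 0 < y) {N : ℕ}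
    (hN : 1 ≤ N) (ht : 1 < t.re) (ht' : t.re < 3 / 2) :
    tailMoment (fun x => φ (x / c)) y t = tailContinuation φ M c y N t := by
  have hN' : (1 : ℝ) ≤ N := by exact_mod_cast hN
  have hdiff : ∀ t : ℂ, 3 / 4 < t.re →
      DifferentiableAt ℂ (tailMoment (fun x => φ (x / c)) y) t :=
    fun t ht => h.differentiableAt_tailMoment_comp_div hc hy ht
  refine eq_of_eventuallyEq_nhdsNE_of_continuousAt (hdiff t (by linarith)).continuousAt
    (h.continuousAt_tailContinuation hc hy hN ht ht') ?_
  refine eventuallyEq_nhdsNE_of_eqOn_isOpen (U := {t | 3 / 4 < t.re ∧ t.re < N / 2 + 1})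
    (V := {t | 3 / 4 < t.re ∧ t.re < 1}) ?_ ?_ ?_ (isOpen_re_strip _ _) ?_ ?_ ?_
    ⟨by linarith, by linarith⟩
  · exact ((convex_Ioo _ _).linear_preimage Complex.reLm).isPreconnected
  · exact fun u hu => (DifferentiableOn.analyticAt (fun v hv =>
      (hdiff v hv.1).differentiableWithinAt) ((isOpen_re_strip _ _).mem_nhds hu)).meromorphicAt
  · exact (h.meromorphicOn_tailContinuation hc hy N).mono_set fun u hu => hu.2
  · exact fun u hu => ⟨hu.1, by linarith [hu.2]⟩
  · exact ⟨(7 / 8 : ℝ), by norm_num, by norm_num⟩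
  · exact fun u hu => h.tailMoment_eq_tailContinuation_of_re_lt_one hc hy.le N hu.1 hu.2

end MellinDensity

end MellinDensity

section MomentSeries

lemma summable_nat_add_one_rpow {e : ℝ} (he : e < -1) :
    Summable fun k : ℕ => ((k : ℝ) + 1) ^ e := by
  simpa using (summable_nat_add_iff 1).2 (Real.summable_nat_rpow.2 he)

lemma hasSum_nat_add_one_cpow_neg {z : ℂ} (hz : 1 < z.re) :
    HasSum (fun k : ℕ => ((k : ℂ) + 1) ^ (-z)) (riemannZeta z) := by
  have hsum : Summable fun k : ℕ => ((k : ℂ) + 1) ^ (-z) := by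
    simpa [Complex.cpow_neg] using
      (summable_nat_add_iff 1).2 (Complex.summable_one_div_nat_cpow.2 hz)
  rw [zeta_eq_tsum_one_div_nat_add_one_cpow hz]
  simpa [Complex.cpow_neg] using hsum.hasSum

lemma meromorphic_riemannZeta : Meromorphic riemannZeta := fun z => by
  have hmero : MeromorphicAt (fun s : ℂ => (s - 1)⁻¹ * riemannZeta₁ s) z :=
    (AnalyticAt.meromorphicAt (by fun_prop)).inv.mul
      (differentiable_riemannZeta₁.analyticAt z).meromorphicAt
  have hne : ∀ᶠ s in 𝓝[≠] z, s ≠ 1 := by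
    rcases eq_or_ne z 1 with rfl | hz
    · exact self_mem_nhdsWithin
    · exact eventually_ne_nhdsWithin hz
  refine hmero.congr ?_
  filter_upwards [hne] with s hs
  rw [riemannZeta_eq_inv_sub_mul hs]

lemma rpow_cpow {x : ℝ} (hx : 0 < x) (e : ℝ) (z : ℂ) :
    ((x ^ e : ℝ) : ℂ) ^ z = (x : ℂ) ^ (e * z) := by
  rw [Complex.cpow_def_of_ne_zero (by exact_mod_cast (Real.rpow_pos_of_pos hx e).ne'),
    Complex.cpow_def_of_ne_zero (by exact_mod_cast hx.ne'), ← Complex.ofReal_log (by positivity),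
    ← Complex.ofReal_log hx.le, Real.log_rpow hx]
  push_cast
  ring_nf

lemma rpow_sub_one_mul_cpow {n b : ℝ} (hn : 0 < n) (hb : 0 < b) (p : ℝ) (t : ℂ) :
    ((n ^ (p - 1) : ℝ) : ℂ) * ((n * b : ℝ) : ℂ) ^ (1 - 2 * t) =
      (b : ℂ) ^ (1 - 2 * t) * (n : ℂ) ^ (-(2 * t - p)) := by
  rw [Complex.ofReal_mul, Complex.mul_cpow_ofReal_nonneg hn.le hb.le, Complex.ofReal_cpow hn.le,
    ← mul_assoc, ← Complex.cpow_add _ _ (by exact_mod_cast hn.ne'), mul_comm]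
  push_cast
  ring_nf

lemma rpow_sub_one_mul_div_pow_mul_cpow {n : ℝ} (hn : 0 < n) (b p δ : ℝ) (γ t : ℂ) (m : ℕ) :
    ((n ^ (p - 1) : ℝ) : ℂ) * (γ / ((n * b : ℝ) : ℂ) ^ (m + 1) *
        (((n ^ δ : ℝ) : ℂ) ^ (m + 2 - 2 * t) / (m + 2 - 2 * t))) =
      γ / b ^ (m + 1) *
        ((n : ℂ) ^ (-(2 * δ * t + ((1 - δ) * (m + 2) - p))) / (m + 2 - 2 * t)) := by
  have hn0 : (n : ℂ) ≠ 0 := by exact_mod_cast hn.ne'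
  have hpow : (n : ℂ) ^ (-(2 * δ * t + ((1 - δ) * (m + 2) - p)) : ℂ) =
      (n : ℂ) ^ (p - 1 : ℂ) * ((n : ℂ) ^ (m + 1))⁻¹ * (n : ℂ) ^ (δ * (m + 2 - 2 * t)) := by
    rw [← Complex.cpow_natCast, ← Complex.cpow_neg, ← Complex.cpow_add _ _ hn0,
      ← Complex.cpow_add _ _ hn0]
    push_cast
    ring_nf
  rw [hpow, rpow_cpow hn, Complex.ofReal_cpow hn.le]
  push_cast
  ring

/-- The `k`-th term, with `n = k + 1`, of the Dirichlet-type series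
`∑ n ^ (p - 1) ∫_{n ^ δ}^∞ x ^ (-2 t) φ(x / (n b)) dx`. -/
noncomputable def momentTerm (φ : ℝ → ℝ) (p δ b : ℝ) (k : ℕ) (t : ℂ) : ℂ :=
  ((((k : ℝ) + 1) ^ (p - 1) : ℝ) : ℂ) *
    tailMoment (fun x => φ (x / ((k + 1) * b))) ((k + 1) ^ δ) t

/-- The contribution to `momentTerm` of the lower truncated transform of the order `N` Taylor
remainder of `φ`. -/
noncomputable def remainderTerm (φ : ℝ → ℝ) (p δ b : ℝ) (N k : ℕ) (t : ℂ) : ℂ :=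
  ((((k : ℝ) + 1) ^ (p - 1) : ℝ) : ℂ) *
    headMoment (fun x => taylorRemainder φ N (x / ((k + 1) * b))) ((k + 1) ^ δ) t

/-- The left abscissa of convergence of `∑ k, remainderTerm φ p δ b N k`. -/
noncomputable def remainderAbscissa (p δ : ℝ) (N : ℕ) : ℝ := (p + 1 - (1 - δ) * (N + 2)) / (2 * δ)

/-- The order `N` meromorphic continuation of `∑ k, momentTerm φ p δ b k`. -/
noncomputable def momentContinuation (φ : ℝ → ℝ) (M : ℂ → ℂ) (p δ b : ℝ) (N : ℕ) (t : ℂ) : ℂ :=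
  (b : ℂ) ^ (1 - 2 * t) * (riemannZeta (2 * t - p) * M t) -
    ∑ m ∈ Finset.range N, (taylorCoeff φ m / b ^ (m + 1) : ℂ) *
      (riemannZeta (2 * δ * t + ((1 - δ) * (m + 2) - p)) / (m + 2 - 2 * t)) -
    ∑' k, remainderTerm φ p δ b N k t

variable {φ : ℝ → ℝ} {M : ℂ → ℂ} {p δ b : ℝ} {t : ℂ} {N : ℕ}

lemma norm_momentTerm_le {A σ : ℝ} (hA : ∀ u, 0 < u → |φ u| ≤ A * u) (hb : 0 < b) (hδ : 0 < δ)
    (hσ : 1 < σ) (ht : σ ≤ t.re) (k : ℕ) :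
    ‖momentTerm φ p δ b k t‖ ≤
      A / (b * (2 * σ - 2)) * ((k : ℝ) + 1) ^ (p - 2 + 2 * δ * (1 - σ)) := by
  have hA0 : 0 ≤ A := by simpa using (abs_nonneg _).trans (hA 1 one_pos)
  have hn : (1 : ℝ) ≤ k + 1 := by linarith [k.cast_nonneg (α := ℝ)]
  set n : ℝ := k + 1
  have hn0 : 0 < n := by linarith
  have htail := norm_tailMoment_le (y := n ^ δ) (t := t) (r := 1)
    (abs_comp_div_le (r := 1) (by simpa using hA) (mul_pos hn0 hb)) (by positivity) (by linarith)
  calc ‖momentTerm φ p δ b k t‖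
      = n ^ (p - 1) * ‖tailMoment (fun x => φ (x / (n * b))) (n ^ δ) t‖ := by
        rw [momentTerm, norm_mul, Complex.norm_of_nonneg (by positivity)]
    _ ≤ n ^ (p - 1) * (A / (n * b) ^ (1 : ℝ) * ((n ^ δ) ^ (1 + 1 - 2 * σ) / (2 * σ - 2))) := by
        refine mul_le_mul_of_nonneg_left (htail.trans ?_) (by positivity)
        gcongr
        · linarith
        · exact Real.one_le_rpow hn hδ.le
        · linarith
    _ = A / (b * (2 * σ - 2)) * (n ^ (p - 1) * n ^ (-1 : ℝ) * n ^ (δ * (1 + 1 - 2 * σ))) := by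
        rw [Real.rpow_one, ← Real.rpow_mul hn0.le, Real.rpow_neg_one]
        field_simp
    _ = A / (b * (2 * σ - 2)) * n ^ (p - 2 + 2 * δ * (1 - σ)) := by
        rw [← Real.rpow_add hn0, ← Real.rpow_add hn0]
        ring_nf

lemma norm_remainderTerm_le {C σ τ : ℝ}
    (hC : ∀ u, 0 < u → |taylorRemainder φ N u| ≤ C * u ^ (N + 1 : ℝ)) (hb : 0 < b) (hδ : 0 < δ)
    (hσ : σ ≤ t.re) (hτ : t.re ≤ τ) (hτN : τ < N / 2 + 1) (k : ℕ) :
    ‖remainderTerm φ p δ b N k t‖ ≤ C / (N + 2 - 2 * τ) * b ^ (-(N + 1) : ℝ) *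
      ((k : ℝ) + 1) ^ (p - N - 2 + δ * (N + 2 - 2 * σ)) := by
  have hC0 : 0 ≤ C := by simpa using (abs_nonneg _).trans (hC 1 one_pos)
  have hn : (1 : ℝ) ≤ k + 1 := by linarith [k.cast_nonneg (α := ℝ)]
  set n : ℝ := k + 1
  have hn0 : 0 < n := by linarith
  have hhead := norm_headMoment_le (y := n ^ δ) (t := t)
    (abs_comp_div_le hC (mul_pos hn0 hb)) (by positivity) (by linarith)
  calc ‖remainderTerm φ p δ b N k t‖
      = n ^ (p - 1) * ‖headMoment (fun x => taylorRemainder φ N (x / (n * b))) (n ^ δ) t‖ := by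
        rw [remainderTerm, norm_mul, Complex.norm_of_nonneg (by positivity)]
    _ ≤ n ^ (p - 1) * (C / (n * b) ^ (N + 1 : ℝ) *
          ((n ^ δ) ^ (N + 1 + 1 - 2 * σ) / (N + 1 + 1 - 2 * τ))) := by
        refine mul_le_mul_of_nonneg_left (hhead.trans ?_) (by positivity)
        gcongr
        · linarith
        · exact Real.one_le_rpow hn hδ.le
    _ = C / (N + 2 - 2 * τ) * b ^ (-(N + 1) : ℝ) *
          (n ^ (p - 1) * n ^ (-(N + 1) : ℝ) * n ^ (δ * (N + 1 + 1 - 2 * σ))) := by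
        rw [Real.mul_rpow hn0.le hb.le, ← Real.rpow_mul hn0.le, Real.rpow_neg hn0.le,
          Real.rpow_neg hb.le, show (N : ℝ) + 1 + 1 - 2 * τ = N + 2 - 2 * τ by ring]
        ring
    _ = _ := by
        rw [← Real.rpow_add hn0, ← Real.rpow_add hn0]
        ring_nf

lemma remainderAbscissa_lt_iff (hδ : 0 < δ) {σ : ℝ} :
    remainderAbscissa p δ N < σ ↔ p + 1 < 2 * δ * σ + (1 - δ) * (N + 2) := by
  rw [remainderAbscissa, div_lt_iff₀ (by positivity), sub_lt_iff_lt_add]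
  ring_nf

lemma exists_remainderAbscissa_lt_and_lt (p : ℝ) (hδ : 0 < δ) (hδ1 : δ < 1) (σ : ℝ) :
    ∃ N : ℕ, 1 ≤ N ∧ remainderAbscissa p δ N < σ ∧ σ < N / 2 + 1 := by
  obtain ⟨n, hn⟩ := exists_nat_gt (max ((p + 1 - 2 * δ * σ) / (1 - δ)) (2 * σ))
  obtain ⟨hleft, hright⟩ := max_lt_iff.1 hn
  rw [div_lt_iff₀ (by linarith)] at hleft
  refine ⟨n + 1, n.succ_pos, (remainderAbscissa_lt_iff hδ).2 ?_, ?_⟩ <;> push_cast <;> nlinarith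

lemma remainderAbscissa_lt_one (hp : p ≤ 1) (hδ : 0 < δ) (hδ1 : δ < 1) (hN : 1 ≤ N) :
    remainderAbscissa p δ N < 1 := by
  have : (1 : ℝ) ≤ N := by exact_mod_cast hN
  exact (remainderAbscissa_lt_iff hδ).2 (by nlinarith)

lemma locallyDominatedOn_momentTerm {A : ℝ} (hA : ∀ u, 0 < u → |φ u| ≤ A * u) (hp : p ≤ 1)
    (hδ : 0 < δ) (hb : 0 < b) :
    LocallyDominatedOn (momentTerm φ p δ b) {t | 1 < t.re} := by
  intro t₀ ht₀
  obtain ⟨σ, hσ, hσt⟩ := exists_between ht₀.out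
  exact ⟨_, (isOpen_lt continuous_const Complex.continuous_re).mem_nhds hσt, _,
    (summable_nat_add_one_rpow (by nlinarith)).mul_left _,
    fun k t ht => norm_momentTerm_le hA hb hδ hσ (le_of_lt ht) k⟩

namespace MellinDensity

lemma differentiableAt_momentTerm (h : MellinDensity φ M) (hb : 0 < b) (k : ℕ)
    (ht : 3 / 4 < t.re) : DifferentiableAt ℂ (momentTerm φ p δ b k) t :=
  (h.differentiableAt_tailMoment_comp_div (by positivity) (by positivity) ht).const_mul _

lemma differentiableOn_tsum_momentTerm (h : MellinDensity φ M) (hp : p ≤ 1) (hδ : 0 < δ)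
    (hb : 0 < b) : DifferentiableOn ℂ (fun t => ∑' k, momentTerm φ p δ b k t) {t | 1 < t.re} := by
  obtain ⟨A, hA⟩ := h.exists_abs_le
  exact (locallyDominatedOn_momentTerm hA hp hδ hb).differentiableOn_tsum
    (isOpen_lt continuous_const Complex.continuous_re) fun k t ht =>
    (h.differentiableAt_momentTerm hb k (by linarith [ht.out])).differentiableWithinAt

lemma locallyDominatedOn_remainderTerm (h : MellinDensity φ M) (hδ : 0 < δ) (hb : 0 < b) :
    LocallyDominatedOn (remainderTerm φ p δ b N)
      {t | remainderAbscissa p δ N < t.re ∧ t.re < N / 2 + 1} := by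
  rintro t₀ ⟨ht₀, ht₀'⟩
  obtain ⟨C, hC⟩ := h.exists_abs_taylorRemainder_le N
  obtain ⟨σ, hσ, hσt⟩ := exists_between ht₀
  obtain ⟨τ, hτt, hτ⟩ := exists_between ht₀'
  rw [remainderAbscissa_lt_iff hδ] at hσ
  exact ⟨_, (isOpen_re_strip σ τ).mem_nhds ⟨hσt, hτt⟩, _,
    (summable_nat_add_one_rpow (by linarith)).mul_left _,
    fun k t ht => norm_remainderTerm_le hC hb hδ ht.1.le ht.2.le hτ k⟩

lemma differentiableOn_tsum_remainderTerm (h : MellinDensity φ M) (hδ : 0 < δ) (hb : 0 < b) :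
    DifferentiableOn ℂ (fun t => ∑' k, remainderTerm φ p δ b N k t)
      {t | remainderAbscissa p δ N < t.re ∧ t.re < N / 2 + 1} :=
  (h.locallyDominatedOn_remainderTerm hδ hb).differentiableOn_tsum (isOpen_re_strip _ _)
    fun _ _ ht => ((h.differentiableAt_headMoment_taylorRemainder (by positivity)
      ht.2).const_mul _).differentiableWithinAt

lemma meromorphicOn_momentContinuation (h : MellinDensity φ M) (hδ : 0 < δ) (hb : 0 < b) :
    MeromorphicOn (momentContinuation φ M p δ b N)
      {t | remainderAbscissa p δ N < t.re ∧ t.re < N / 2 + 1} := by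
  intro t ht
  have hzeta : ∀ α β : ℂ, MeromorphicAt (fun t => riemannZeta (α * t + β)) t := fun α β =>
    (meromorphic_riemannZeta _).comp_analyticAt (f := riemannZeta) (by fun_prop)
  have hbpow : AnalyticAt ℂ (fun t => (b : ℂ) ^ (1 - 2 * t)) t :=
    analyticAt_const.cpow (by fun_prop) (by simp [hb])
  refine MeromorphicAt.sub (MeromorphicAt.sub ?_ ?_) ?_
  · exact hbpow.meromorphicAt.mul ((hzeta 2 (-p)).mul (h.meromorphic t))
  · refine MeromorphicAt.fun_sum fun m _ => (MeromorphicAt.const _ t).mul ((hzeta _ _).div ?_)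
    exact AnalyticAt.meromorphicAt (by fun_prop)
  · exact ((h.differentiableOn_tsum_remainderTerm hδ hb).analyticAt
      ((isOpen_re_strip _ _).mem_nhds ht)).meromorphicAt

lemma momentTerm_eq (h : MellinDensity φ M) (hb : 0 < b) (hN : 1 ≤ N) (ht : 1 < t.re)
    (ht' : t.re < 3 / 2) (k : ℕ) :
    momentTerm φ p δ b k t =
      (b : ℂ) ^ (1 - 2 * t) * (((k : ℂ) + 1) ^ (-(2 * t - p)) * M t) -
      ∑ m ∈ Finset.range N, (taylorCoeff φ m / b ^ (m + 1) : ℂ) *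
        (((k : ℂ) + 1) ^ (-(2 * δ * t + ((1 - δ) * (m + 2) - p))) / (m + 2 - 2 * t)) -
      remainderTerm φ p δ b N k t := by
  have hn : (0 : ℝ) < (k : ℝ) + 1 := by positivity
  rw [momentTerm, h.tailMoment_eq_tailContinuation (by positivity) (by positivity) hN ht ht',
    tailContinuation, mul_sub, mul_sub, Finset.mul_sum, ← mul_assoc, rpow_sub_one_mul_cpow hn hb,
    mul_assoc]
  simp only [rpow_sub_one_mul_div_pow_mul_cpow hn, remainderTerm, Complex.ofReal_add,
    Complex.ofReal_natCast, Complex.ofReal_one]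

lemma tsum_momentTerm_eq_momentContinuation (h : MellinDensity φ M) (hp : p ≤ 1) (hδ : 0 < δ)
    (hδ1 : δ < 1) (hb : 0 < b) (hN : 1 ≤ N) (ht : 1 < t.re) (ht' : t.re < 3 / 2) :
    ∑' k, momentTerm φ p δ b k t = momentContinuation φ M p δ b N t := by
  have hN' : (1 : ℝ) ≤ N := by exact_mod_cast hN
  have hzeta := hasSum_nat_add_one_cpow_neg (z := 2 * t - p) (by
    simp only [Complex.sub_re, Complex.mul_re, Complex.re_ofNat, Complex.im_ofNat, zero_mul,
      sub_zero, Complex.ofReal_re]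
    linarith)
  have hzeta_taylor := fun m : ℕ =>
    hasSum_nat_add_one_cpow_neg (z := 2 * δ * t + ((1 - δ) * (m + 2) - p)) (by
      have : (2 * δ * t + ((1 - δ) * (m + 2) - p) : ℂ).re =
        2 * δ * t.re + ((1 - δ) * (m + 2) - p) := by simp
      nlinarith [m.cast_nonneg (α := ℝ)])
  have hmem : t ∈ {t : ℂ | remainderAbscissa p δ N < t.re ∧ t.re < N / 2 + 1} :=
    ⟨(remainderAbscissa_lt_one hp hδ hδ1 hN).trans ht, by linarith⟩
  have hrem := ((h.locallyDominatedOn_remainderTerm hδ hb).summable_norm hmem).of_norm.hasSum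
  have hsum := (((hzeta.mul_right (M t)).mul_left ((b : ℂ) ^ (1 - 2 * t))).sub
    (hasSum_sum fun m (_ : m ∈ Finset.range N) => ((hzeta_taylor m).div_const
      (m + 2 - 2 * t : ℂ)).mul_left (taylorCoeff φ m / b ^ (m + 1) : ℂ))).sub hrem
  simp only [h.momentTerm_eq hb hN ht ht']
  exact hsum.tsum_eq

lemma exists_meromorphicNFAt_eq_tsum_momentTerm (h : MellinDensity φ M) (hp : p ≤ 1) (hδ : 0 < δ)
    (hδ1 : δ < 1) (hb : 0 < b) :
    ∃ S : ℂ → ℂ, (∀ t, MeromorphicNFAt S t) ∧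
      (∀ t : ℂ, 1 < t.re → S t = ∑' k, momentTerm φ p δ b k t) ∧
      ∀ N, 1 ≤ N → ∀ t : ℂ, remainderAbscissa p δ N < t.re → t.re < N / 2 + 1 →
        S =ᶠ[𝓝[≠] t] momentContinuation φ M p δ b N := by
  let D : Option ℕ → Set ℂ := fun i => i.elim {t | 1 < t.re} fun N =>
    {t | remainderAbscissa p δ (N + 1) < t.re ∧ t.re < ((N + 1 : ℕ) : ℝ) / 2 + 1}
  let f : Option ℕ → ℂ → ℂ := fun i => i.elim (fun t => ∑' k, momentTerm φ p δ b k t) fun N =>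
    momentContinuation φ M p δ b (N + 1)
  have hright : IsOpen {t : ℂ | 1 < t.re} := isOpen_lt continuous_const Complex.continuous_re
  have hanalytic : AnalyticOnNhd ℂ (fun t => ∑' k, momentTerm φ p δ b k t) {t | 1 < t.re} :=
    (h.differentiableOn_tsum_momentTerm hp hδ hb).analyticOnNhd hright
  have heq : ∀ i, ∀ t ∈ {t : ℂ | 1 < t.re ∧ t.re < 3 / 2},
      f i t = ∑' k, momentTerm φ p δ b k t := by
    rintro (_ | N) t ⟨ht, ht'⟩
    · rfl
    · exact (h.tsum_momentTerm_eq_momentContinuation hp hδ hδ1 hb N.succ_pos ht ht').symm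
  obtain ⟨S, hS, hSf⟩ := exists_meromorphicNFAt_eventuallyEq_of_cover (D := D) (f := f)
    (isOpen_re_strip 1 (3 / 2)) ⟨(5 / 4 : ℝ), by norm_num, by norm_num⟩
    (by rintro (_ | N); exacts [hright, isOpen_re_strip _ _])
    (by rintro (_ | N)
        exacts [(convex_Ioi _).linear_preimage Complex.reLm,
          (convex_Ioo _ _).linear_preimage Complex.reLm])
    (by rintro (_ | N) t ⟨ht, ht'⟩
        · exact ht
        · exact ⟨(remainderAbscissa_lt_one hp hδ hδ1 N.succ_pos).trans ht,
            by push_cast; linarith [N.cast_nonneg (α := ℝ)]⟩)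
    (by rintro (_ | N)
        exacts [hanalytic.meromorphicOn, h.meromorphicOn_momentContinuation hδ hb])
    (fun i j t ht => (heq i t ht).trans (heq j t ht).symm)
    (fun t => by
      obtain ⟨N, hN, hleft, hright⟩ := exists_remainderAbscissa_lt_and_lt p hδ hδ1 t.re
      obtain ⟨n, rfl⟩ := Nat.exists_eq_add_of_le' hN
      exact ⟨some n, hleft, hright⟩)
  refine ⟨S, hS, fun t ht => ?_, fun N hN t ht ht' => ?_⟩
  · exact (eventuallyEq_nhds_of_meromorphicNFAt (hS t) (hanalytic t ht)
      (hSf none t ht)).eq_of_nhds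
  · obtain ⟨n, rfl⟩ := Nat.exists_eq_add_of_le' hN
    exact hSf (some n) t ⟨ht, ht'⟩

end MellinDensity

end MomentSeries

section BinomialShiftSum

/-- The series `∑ binom(s + j - 1, j) 4 ^ (-j) S(s + j)`, into which expanding
`(x ^ 2 - 1 / 4) ^ (-s)` in powers of `x` turns the sum of kernel integrals. -/
noncomputable def binomialShiftSum (S : ℂ → ℂ) (s : ℂ) : ℂ :=
  ∑' j : ℕ, Ring.multichoose s j * (1 / 4) ^ j * S (s + j)

/-- The part of `binomialShiftSum` with `j ≥ J`. -/
noncomputable def binomialShiftTail (S : ℂ → ℂ) (J : ℕ) (s : ℂ) : ℂ :=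
  ∑' j : ℕ, Ring.multichoose s (j + J) * (1 / 4) ^ (j + J) * S (s + (j + J : ℕ))

variable {S : ℂ → ℂ}

lemma locallyDominatedOn_multichoose_mul_shift
    (hS : ∀ σ, 1 < σ → ∃ K, ∀ t : ℂ, σ ≤ t.re → ‖S t‖ ≤ K) (J : ℕ) :
    LocallyDominatedOn
      (fun (j : ℕ) s => Ring.multichoose s (j + J) * (1 / 4) ^ (j + J) * S (s + (j + J : ℕ)))
      {s | 1 < s.re + J} := by
  intro s₀ hs₀
  obtain ⟨σ, hσ, hσs⟩ := exists_between hs₀.out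
  obtain ⟨K, hK⟩ := hS σ hσ
  have hnhds : {s : ℂ | σ < s.re + J} ∩ Metric.ball s₀ 1 ∈ 𝓝 s₀ :=
    inter_mem ((isOpen_lt (by fun_prop) (by fun_prop)).mem_nhds hσs)
      (Metric.ball_mem_nhds _ one_pos)
  refine ⟨_, hnhds, _, ((summable_nat_add_iff J).2
    (summable_multichoose_mul_quarter_pow (‖s₀‖ + 1))).mul_right K, fun j s hs => ?_⟩
  have hs_norm : ‖s‖ ≤ ‖s₀‖ + 1 := by
    linarith [norm_le_norm_add_norm_sub' s s₀, mem_ball_iff_norm.1 hs.2]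
  have hre : σ ≤ (s + (j + J : ℕ) : ℂ).re := by
    have := hs.1.out
    simp only [Complex.add_re, Complex.natCast_re, Nat.cast_add]
    linarith [j.cast_nonneg (α := ℝ)]
  have hmulti := norm_multichoose_le s hs_norm (j + J)
  have hquarter : ‖((1 / 4 : ℂ)) ^ (j + J)‖ = (1 / 4 : ℝ) ^ (j + J) := by simp
  rw [norm_mul, norm_mul, hquarter]
  have := (norm_nonneg _).trans hmulti
  gcongr
  exact hK _ hre

lemma binomialShiftSum_eq_sum_add_tail (hS : ∀ σ, 1 < σ → ∃ K, ∀ t : ℂ, σ ≤ t.re → ‖S t‖ ≤ K)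
    {J : ℕ} {s : ℂ} (hs : 1 < s.re + J) :
    binomialShiftSum S s =
      ∑ j ∈ Finset.range J, Ring.multichoose s j * (1 / 4) ^ j * S (s + j) +
        binomialShiftTail S J s := by
  have hsum : Summable fun j : ℕ => Ring.multichoose s j * (1 / 4) ^ j * S (s + j) :=
    (summable_nat_add_iff (f := fun j : ℕ => Ring.multichoose s j * (1 / 4) ^ j * S (s + j)) J).1
      ((locallyDominatedOn_multichoose_mul_shift hS J).summable_norm hs).of_norm
  exact (hsum.sum_add_tsum_nat_add J).symm

lemma differentiableOn_binomialShiftTail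
    (hS : ∀ σ, 1 < σ → ∃ K, ∀ t : ℂ, σ ≤ t.re → ‖S t‖ ≤ K)
    (hSd : DifferentiableOn ℂ S {t | 1 < t.re}) (J : ℕ) :
    DifferentiableOn ℂ (binomialShiftTail S J) {s | 1 < s.re + J} := by
  refine (locallyDominatedOn_multichoose_mul_shift hS J).differentiableOn_tsum
    (isOpen_lt (by fun_prop) (by fun_prop)) fun j => ?_
  refine ((differentiable_multichoose _).differentiableOn.mul_const _).mul
    (hSd.comp (by fun_prop) fun s hs => ?_)
  have := hs.out
  simp only [Set.mem_ofPred_eq, Complex.add_re, Complex.natCast_re, Nat.cast_add]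
  linarith [j.cast_nonneg (α := ℝ)]

lemma analyticAt_binomialShiftTail
    (hS : ∀ σ, 1 < σ → ∃ K, ∀ t : ℂ, σ ≤ t.re → ‖S t‖ ≤ K)
    (hSd : DifferentiableOn ℂ S {t | 1 < t.re}) {J : ℕ} {s : ℂ} (hs : 1 < s.re + J) :
    AnalyticAt ℂ (binomialShiftTail S J) s :=
  (differentiableOn_binomialShiftTail hS hSd J).analyticAt
    ((isOpen_lt (by fun_prop) (by fun_prop)).mem_nhds hs)

lemma meromorphic_binomialShiftSum
    (hS : ∀ σ, 1 < σ → ∃ K, ∀ t : ℂ, σ ≤ t.re → ‖S t‖ ≤ K)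
    (hSd : DifferentiableOn ℂ S {t | 1 < t.re}) (hSm : Meromorphic S) :
    Meromorphic (binomialShiftSum S) := by
  intro s₀
  obtain ⟨J, hJ⟩ := exists_nat_gt (1 - s₀.re)
  have hmem : {s : ℂ | 1 < s.re + J} ∈ 𝓝 s₀ :=
    (isOpen_lt (by fun_prop) (by fun_prop)).mem_nhds (by rw [Set.mem_ofPred_eq]; linarith)
  have hsum : MeromorphicAt (fun s => ∑ j ∈ Finset.range J,
      Ring.multichoose s j * (1 / 4) ^ j * S (s + j) + binomialShiftTail S J s) s₀ := by
    refine MeromorphicAt.add (MeromorphicAt.fun_sum fun j _ => ?_)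
      (analyticAt_binomialShiftTail hS hSd (by linarith)).meromorphicAt
    exact (((differentiable_multichoose j).analyticAt s₀).meromorphicAt.mul
      (MeromorphicAt.const _ _)).mul ((hSm _).comp_analyticAt (by fun_prop))
  refine hsum.congr (mem_nhdsWithin_of_mem_nhds ?_)
  filter_upwards [hmem] with s hs
  exact (binomialShiftSum_eq_sum_add_tail hS hs).symm

lemma binomialShiftTail_two_zero : binomialShiftTail S 2 0 = 0 := by
  simp [binomialShiftTail, Ring.multichoose_zero_succ]

end BinomialShiftSum

section KernelSeries

/-- The `k`-th term, with `n = k + 1`, of the series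
`∑ n ^ (p - 1) ∫_{n ^ δ}^∞ (x ^ 2 - 1 / 4) ^ (-s) φ(x / (n b)) dx`; the three families of error
integrals are of this form up to a factor independent of `k`. -/
noncomputable def kernelTerm (φ : ℝ → ℝ) (p δ b : ℝ) (k : ℕ) (s : ℂ) : ℂ :=
  ((((k : ℝ) + 1) ^ (p - 1) : ℝ) : ℂ) * ∫ x in Set.Ioi (((k : ℝ) + 1) ^ δ),
    ((x ^ 2 - 1 / 4 : ℝ) : ℂ) ^ (-s) * (φ (x / ((k + 1) * b)) : ℂ)

variable {φ : ℝ → ℝ} {M : ℂ → ℂ} {A p δ b : ℝ} {s : ℂ}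

lemma exists_norm_tsum_momentTerm_le (hA : ∀ u, 0 < u → |φ u| ≤ A * u) (hp : p ≤ 1) (hδ : 0 < δ)
    (hb : 0 < b) (σ : ℝ) (hσ : 1 < σ) :
    ∃ K, ∀ t : ℂ, σ ≤ t.re → ‖∑' k, momentTerm φ p δ b k t‖ ≤ K :=
  ⟨_, fun _ ht => tsum_of_norm_bounded
    ((summable_nat_add_one_rpow (by nlinarith)).mul_left _).hasSum
    fun k => norm_momentTerm_le hA hb hδ hσ ht k⟩

lemma hasSum_kernelTerm (hφ : Continuous φ) (hA : ∀ u, 0 < u → |φ u| ≤ A * u) (hδ : 0 < δ)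
    (hb : 0 < b) (hs : 1 < s.re) (k : ℕ) :
    HasSum (fun j : ℕ => Ring.multichoose s j * (1 / 4) ^ j * momentTerm φ p δ b k (s + j))
      (kernelTerm φ p δ b k s) := by
  have hn : (1 : ℝ) ≤ (k : ℝ) + 1 := by linarith [k.cast_nonneg (α := ℝ)]
  have hscaled := abs_comp_div_le (r := 1) (g := φ) (C := A) (by simpa using hA)
    (c := ((k : ℝ) + 1) * b) (by positivity)
  simp only [Real.rpow_one] at hscaled
  have hsum := (hasSum_multichoose_mul_tailMoment (ψ := fun x => φ (x / ((k + 1) * b)))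
    (hφ.comp (continuous_id.div_const _)) hscaled (Real.one_le_rpow hn hδ.le) hs).mul_left
    ((((k : ℝ) + 1) ^ (p - 1) : ℝ) : ℂ)
  simpa only [momentTerm, kernelTerm, mul_left_comm] using hsum

lemma norm_multichoose_mul_momentTerm_le (hA : ∀ u, 0 < u → |φ u| ≤ A * u) (hδ : 0 < δ)
    (hb : 0 < b) {σ R : ℝ} (hσ : 1 < σ) (hs : σ ≤ s.re) (hR : ‖s‖ ≤ R) (j k : ℕ) :
    ‖Ring.multichoose s j * (1 / 4) ^ j * momentTerm φ p δ b k (s + j)‖ ≤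
      Ring.multichoose R j * (1 / 4) ^ j *
        (A / (b * (2 * σ - 2)) * ((k : ℝ) + 1) ^ (p - 2 + 2 * δ * (1 - σ))) := by
  have hmulti := norm_multichoose_le s hR j
  have hquarter : ‖((1 / 4 : ℂ)) ^ j‖ = (1 / 4 : ℝ) ^ j := by simp
  have hre : σ ≤ (s + j : ℂ).re := by
    simp only [Complex.add_re, Complex.natCast_re]
    linarith [j.cast_nonneg (α := ℝ)]
  have := (norm_nonneg _).trans hmulti
  rw [norm_mul, norm_mul, hquarter]
  gcongr
  exact norm_momentTerm_le hA hb hδ hσ hre k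

lemma locallyDominatedOn_kernelTerm (hφ : Continuous φ) (hA : ∀ u, 0 < u → |φ u| ≤ A * u)
    (hp : p ≤ 1) (hδ : 0 < δ) (hb : 0 < b) :
    LocallyDominatedOn (kernelTerm φ p δ b) {s | 1 < s.re} := by
  intro s₀ hs₀
  obtain ⟨σ, hσ, hσs⟩ := exists_between hs₀.out
  have hnhds : {s : ℂ | σ < s.re} ∩ Metric.ball s₀ 1 ∈ 𝓝 s₀ :=
    inter_mem ((isOpen_lt (by fun_prop) (by fun_prop)).mem_nhds hσs)
      (Metric.ball_mem_nhds _ one_pos)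
  refine ⟨_, hnhds, _, ((summable_nat_add_one_rpow (e := p - 2 + 2 * δ * (1 - σ))
    (by nlinarith)).mul_left (A / (b * (2 * σ - 2)))).mul_left
      (∑' j, Ring.multichoose (‖s₀‖ + 1) j * (1 / 4 : ℝ) ^ j), fun k s hs => ?_⟩
  have hs_norm : ‖s‖ ≤ ‖s₀‖ + 1 := by
    linarith [norm_le_norm_add_norm_sub' s s₀, mem_ball_iff_norm.1 hs.2]
  have hσs := hs.1.out
  rw [← (hasSum_kernelTerm hφ hA hδ hb (hσ.trans hσs) k).tsum_eq]
  exact tsum_of_norm_bounded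
    ((summable_multichoose_mul_quarter_pow (‖s₀‖ + 1)).hasSum.mul_right _)
    fun j => norm_multichoose_mul_momentTerm_le hA hδ hb hσ hσs.le hs_norm j k

lemma tsum_kernelTerm_eq_binomialShiftSum (hφ : Continuous φ)
    (hA : ∀ u, 0 < u → |φ u| ≤ A * u) (hp : p ≤ 1) (hδ : 0 < δ) (hb : 0 < b) {S : ℂ → ℂ}
    (hS : ∀ t : ℂ, 1 < t.re → S t = ∑' k, momentTerm φ p δ b k t) (hs : 1 < s.re) :
    ∑' k, kernelTerm φ p δ b k s = binomialShiftSum S s := by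
  have hsummable : Summable fun jk : ℕ × ℕ =>
      Ring.multichoose s jk.1 * (1 / 4) ^ jk.1 * momentTerm φ p δ b jk.2 (s + jk.1) := by
    refine Summable.of_norm_bounded (Summable.mul_of_nonneg
      (summable_multichoose_mul_quarter_pow ‖s‖)
      ((summable_nat_add_one_rpow (e := p - 2 + 2 * δ * (1 - s.re)) (by nlinarith)).mul_left
        (A / (b * (2 * s.re - 2)))) ?_ ?_)
      fun jk => norm_multichoose_mul_momentTerm_le hA hδ hb hs le_rfl le_rfl jk.1 jk.2
    · exact fun j => mul_nonneg (multichoose_nonneg (norm_nonneg s) j) (by positivity)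
    · exact fun k => (norm_nonneg _).trans (norm_momentTerm_le hA hb hδ hs le_rfl k)
  calc ∑' k, kernelTerm φ p δ b k s
      = ∑' k, ∑' j : ℕ, Ring.multichoose s j * (1 / 4) ^ j * momentTerm φ p δ b k (s + j) :=
        tsum_congr fun k => (hasSum_kernelTerm hφ hA hδ hb hs k).tsum_eq.symm
    _ = ∑' j : ℕ, ∑' k, Ring.multichoose s j * (1 / 4) ^ j * momentTerm φ p δ b k (s + j) :=
        Summable.tsum_comm hsummable
    _ = binomialShiftSum S s := tsum_congr fun j => by
        rw [tsum_mul_left, hS]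
        simp only [Complex.add_re, Complex.natCast_re]
        linarith [j.cast_nonneg (α := ℝ)]

end KernelSeries

section RemovableJet

/-- `f` has a removable singularity at `0`, and its analytic extension has value `c` and derivative
`d` there. -/
def HasRemovableJet (f : ℂ → ℂ) (c d : ℂ) : Prop :=
  ∃ g : ℂ → ℂ, AnalyticAt ℂ g 0 ∧ f =ᶠ[𝓝[≠] 0] g ∧ g 0 = c ∧ deriv g 0 = d

lemma hasRemovableJet_of_hasDerivAt {f : ℂ → ℂ} {d : ℂ} (hf : AnalyticAt ℂ f 0)
    (hd : HasDerivAt f d 0) : HasRemovableJet f (f 0) d :=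
  ⟨f, hf, .rfl, rfl, hd.deriv⟩

lemma hasRemovableJet_of_analyticAt {f : ℂ → ℂ} (hf : AnalyticAt ℂ f 0) :
    HasRemovableJet f (f 0) (deriv f 0) :=
  ⟨f, hf, .rfl, rfl, rfl⟩

namespace HasRemovableJet

variable {f g : ℂ → ℂ} {c d c' d' : ℂ}

lemma congr (hf : HasRemovableJet f c d) (hfg : g =ᶠ[𝓝[≠] 0] f) : HasRemovableJet g c d :=
  let ⟨F, hF, hfF, hjet⟩ := hf
  ⟨F, hF, hfg.trans hfF, hjet⟩

lemma congr_value (hf : HasRemovableJet f c d) (hc : c = c') : HasRemovableJet f c' d :=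
  hc ▸ hf

lemma congr_deriv (hf : HasRemovableJet f c d) (hd : d = d') : HasRemovableJet f c d' :=
  hd ▸ hf

lemma add (hf : HasRemovableJet f c d) (hg : HasRemovableJet g c' d') :
    HasRemovableJet (fun s => f s + g s) (c + c') (d + d') := by
  obtain ⟨F, hF, hfF, rfl, rfl⟩ := hf
  obtain ⟨G, hG, hgG, rfl, rfl⟩ := hg
  exact ⟨_, hF.fun_add hG, hfF.add hgG, rfl,
    deriv_fun_add hF.differentiableAt hG.differentiableAt⟩

lemma mul (hf : HasRemovableJet f c d) (hg : HasRemovableJet g c' d') :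
    HasRemovableJet (fun s => f s * g s) (c * c') (d * c' + c * d') := by
  obtain ⟨F, hF, hfF, rfl, rfl⟩ := hf
  obtain ⟨G, hG, hgG, rfl, rfl⟩ := hg
  exact ⟨_, hF.fun_mul hG, hfF.mul hgG, rfl,
    deriv_fun_mul hF.differentiableAt hG.differentiableAt⟩

lemma const_mul (a : ℂ) (hf : HasRemovableJet f c d) :
    HasRemovableJet (fun s => a * f s) (a * c) (a * d) := by
  simpa using (hasRemovableJet_of_analyticAt (f := fun _ => a) analyticAt_const).mul hf

lemma sub (hf : HasRemovableJet f c d) (hg : HasRemovableJet g c' d') :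
    HasRemovableJet (fun s => f s - g s) (c - c') (d - d') := by
  simpa [sub_eq_add_neg] using hf.add (hg.const_mul (-1))

lemma sum {ι : Type*} (I : Finset ι) {f : ι → ℂ → ℂ} {c d : ι → ℂ}
    (hf : ∀ i ∈ I, HasRemovableJet (f i) (c i) (d i)) :
    HasRemovableJet (fun s => ∑ i ∈ I, f i s) (∑ i ∈ I, c i) (∑ i ∈ I, d i) := by
  classical
  induction I using Finset.induction_on with
  | empty => simpa using hasRemovableJet_of_analyticAt (f := fun _ => 0) analyticAt_const
  | insert i I hi ih =>
    simp only [Finset.sum_insert hi]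
    exact (hf i (Finset.mem_insert_self i I)).add
      (ih fun j hj => hf j (Finset.mem_insert_of_mem hj))

lemma analyticAt_and_hasDerivAt_update (hf : HasRemovableJet f c d) :
    AnalyticAt ℂ (Function.update f 0 c) 0 ∧ HasDerivAt (Function.update f 0 c) d 0 := by
  obtain ⟨g, hg, hfg, rfl, rfl⟩ := hf
  have hupdate : Function.update f 0 (g 0) =ᶠ[𝓝 0] g := by
    filter_upwards [eventually_nhdsWithin_iff.1 hfg] with s hs
    rcases eq_or_ne s 0 with rfl | hs0
    · exact Function.update_self ..
    · rw [Function.update_of_ne hs0, hs hs0]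
  exact ⟨hg.congr hupdate.symm, hg.differentiableAt.hasDerivAt.congr_of_eventuallyEq hupdate⟩

end HasRemovableJet

lemma hasRemovableJet_cpow_sub_two_mul {b : ℝ} (hb : 0 < b) (z : ℂ) :
    HasRemovableJet (fun s => (b : ℂ) ^ (z - 2 * s)) ((b : ℂ) ^ z)
      (-2 * Real.log b * (b : ℂ) ^ z) := by
  have hderiv : HasDerivAt (fun s : ℂ => z - 2 * s) (-(2 * 1)) 0 :=
    ((hasDerivAt_id (0 : ℂ)).const_mul 2).const_sub z
  have hpow := hderiv.const_cpow (c := (b : ℂ)) (Or.inl (Complex.ofReal_ne_zero.2 hb.ne'))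
  have hjet := hasRemovableJet_of_hasDerivAt (analyticAt_const.cpow (by fun_prop)
    (Complex.ofReal_mem_slitPlane.2 hb)) hpow
  rw [mul_zero, sub_zero, ← Complex.ofReal_log hb.le] at hjet
  convert hjet using 1
  ring

/-- The factor `sin(πs) / π` common to all error integrals. -/
noncomputable def sinPiDivPi (s : ℂ) : ℂ := Complex.sin (Real.pi * s) / Real.pi

lemma differentiable_sinPiDivPi : Differentiable ℂ sinPiDivPi := by
  unfold sinPiDivPi
  fun_prop

lemma hasDerivAt_sinPiDivPi_zero : HasDerivAt sinPiDivPi 1 0 := by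
  have hpi : (Real.pi : ℂ) ≠ 0 := Complex.ofReal_ne_zero.2 Real.pi_ne_zero
  have hsin := ((((hasDerivAt_id (0 : ℂ)).const_mul (Real.pi : ℂ)).csin).div_const (Real.pi : ℂ))
  exact hsin.congr_deriv (by simp [hpi])

lemma hasRemovableJet_sinPiDivPi : HasRemovableJet sinPiDivPi 0 1 := by
  simpa [sinPiDivPi] using hasRemovableJet_of_hasDerivAt (differentiable_sinPiDivPi.analyticAt 0)
    hasDerivAt_sinPiDivPi_zero

lemma hasRemovableJet_sinPiDivPi_mul {f : ℂ → ℂ} (hf : AnalyticAt ℂ f 0) :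
    HasRemovableJet (fun s => sinPiDivPi s * f s) 0 (f 0) := by
  simpa using hasRemovableJet_sinPiDivPi.mul (hasRemovableJet_of_analyticAt hf)

lemma hasRemovableJet_sinPiDivPi_div : ∃ d, HasRemovableJet (fun s => sinPiDivPi s / s) 1 d := by
  have hd : DifferentiableOn ℂ (dslope sinPiDivPi 0) Set.univ :=
    (Complex.differentiableOn_dslope univ_mem).2 differentiable_sinPiDivPi.differentiableOn
  refine ⟨_, dslope sinPiDivPi 0, hd.analyticAt univ_mem, ?_, ?_, rfl⟩
  · filter_upwards [self_mem_nhdsWithin] with s hs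
    rw [dslope_of_ne _ hs, slope_def_field, sub_zero]
    simp [sinPiDivPi]
  · rw [dslope_same, hasDerivAt_sinPiDivPi_zero.deriv]

lemma analyticAt_riemannZeta {z : ℂ} (hz : z ≠ 1) : AnalyticAt ℂ riemannZeta z :=
  (meromorphic_riemannZeta z).analyticAt (differentiableAt_riemannZeta hz).continuousAt

lemma hasRemovableJet_mul_riemannZeta {a : ℂ} (ha : a ≠ 0) :
    ∃ d, HasRemovableJet (fun s => s * riemannZeta (a * s + 1)) (1 / a) d := by
  have hdiff : Differentiable ℂ fun s => riemannZeta₁ (a * s + 1) / a := by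
    have := differentiable_riemannZeta₁
    fun_prop
  refine ⟨_, _, hdiff.analyticAt 0, ?_, by simp [riemannZeta₁_one], rfl⟩
  filter_upwards [self_mem_nhdsWithin] with s hs
  have hs0 : s ≠ 0 := hs
  rw [riemannZeta_eq_inv_sub_mul (by simpa using ⟨ha, hs0⟩), add_sub_cancel_right]
  field_simp

lemma hasRemovableJet_sinPiDivPi_mul_riemannZeta {a : ℂ} (ha : a ≠ 0) :
    ∃ d, HasRemovableJet (fun s => sinPiDivPi s * riemannZeta (a * s + 1)) (1 / a) d := by
  obtain ⟨d, hsin⟩ := hasRemovableJet_sinPiDivPi_div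
  obtain ⟨d', hzeta⟩ := hasRemovableJet_mul_riemannZeta ha
  refine ⟨_, ((hsin.mul hzeta).congr_value (one_mul _)).congr ?_⟩
  filter_upwards [self_mem_nhdsWithin] with s hs
  rw [← mul_assoc, div_mul_cancel₀ _ hs]

lemma exists_hasRemovableJet_sinPiDivPi_mul_riemannZeta {a : ℂ} (ha : a ≠ 0) (z : ℂ) :
    ∃ c d, HasRemovableJet (fun s => sinPiDivPi s * riemannZeta (a * s + z)) c d := by
  rcases eq_or_ne z 1 with rfl | hz
  · exact ⟨_, hasRemovableJet_sinPiDivPi_mul_riemannZeta ha⟩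
  · exact ⟨_, _, hasRemovableJet_sinPiDivPi_mul
      (AnalyticAt.fun_comp (g := riemannZeta) (analyticAt_riemannZeta (by simpa))
        (by fun_prop))⟩

lemma exists_hasRemovableJet_div_sub_two_mul (m : ℕ) :
    ∃ c d, HasRemovableJet (fun s => s / (m - 2 * s)) c d := by
  rcases eq_or_ne m 0 with rfl | hm
  · refine ⟨_, _, (hasRemovableJet_of_analyticAt (f := fun _ => -1 / 2) analyticAt_const).congr ?_⟩
    filter_upwards [self_mem_nhdsWithin] with s hs
    have : s ≠ 0 := hs
    field_simp
    simp
  · exact ⟨_, _, hasRemovableJet_of_analyticAt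
      (analyticAt_id.div (by fun_prop) (by simpa using hm))⟩

end RemovableJet

section JetOfKernelSeries

variable {φ : ℝ → ℝ} {M w : ℂ → ℂ} {p δ b : ℝ} {z α₀ α₁ β₀ β₁ w₁ : ℂ} {N : ℕ}

lemma isBigO_inv_pow_succ_atTop (m : ℕ) :
    (fun b : ℝ => ((b : ℂ) ^ (m + 1))⁻¹) =O[atTop] fun b => 1 / b := by
  refine Asymptotics.IsBigO.of_bound' ?_
  filter_upwards [eventually_ge_atTop 1] with b hb
  have hb0 : 0 < b := by linarith
  rw [norm_inv, norm_pow, Complex.norm_of_nonneg hb0.le, Real.norm_of_nonneg (by positivity),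
    one_div]
  exact inv_anti₀ hb0 (le_self_pow₀ hb m.succ_ne_zero)

lemma isBigO_sum_div_pow_succ_atTop (I : Finset ℕ) (γ d : ℕ → ℂ) :
    (fun b : ℝ => ∑ m ∈ I, γ m / (b : ℂ) ^ (m + 1) * d m) =O[atTop] fun b => 1 / b := by
  refine Asymptotics.IsBigO.fun_sum fun m _ =>
    ((isBigO_inv_pow_succ_atTop m).const_mul_left (γ m * d m)).congr_left fun b => ?_
  ring

lemma hasRemovableJet_sinPiDivPi_mul_binomialShiftSum {S f : ℂ → ℂ} {c d c' d' : ℂ}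
    (hS : ∀ σ, 1 < σ → ∃ K, ∀ t : ℂ, σ ≤ t.re → ‖S t‖ ≤ K)
    (hSd : DifferentiableOn ℂ S {t | 1 < t.re}) (hS₀ : S =ᶠ[𝓝[≠] 0] f) (hS₁ : S =ᶠ[𝓝[≠] 1] f)
    (hf₀ : HasRemovableJet (fun s => sinPiDivPi s * f s) c d)
    (hf₁ : HasRemovableJet (fun s => sinPiDivPi s * (s / 4) * f (s + 1)) c' d') :
    HasRemovableJet (fun s => sinPiDivPi s * binomialShiftSum S s) (c + c') (d + d') := by
  have htail : HasRemovableJet (fun s => sinPiDivPi s * binomialShiftTail S 2 s) 0 0 := by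
    simpa only [binomialShiftTail_two_zero] using hasRemovableJet_sinPiDivPi_mul
      (analyticAt_binomialShiftTail hS hSd (J := 2) (s := 0) (by simp))
  have hshift : ∀ᶠ s in 𝓝[≠] (0 : ℂ), S (s + 1) = f (s + 1) := by
    have htendsto : Tendsto (fun s : ℂ => s + 1) (𝓝[≠] 0) (𝓝[≠] 1) := by
      refine tendsto_nhdsWithin_iff.2 ⟨?_, ?_⟩
      · exact (Continuous.tendsto' (by fun_prop) 0 1 (by simp)).mono_left nhdsWithin_le_nhds
      · filter_upwards [self_mem_nhdsWithin] with s hs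
        simpa using hs
    exact htendsto.eventually hS₁
  have hre : {s : ℂ | 1 < s.re + (2 : ℕ)} ∈ 𝓝[≠] 0 :=
    mem_nhdsWithin_of_mem_nhds ((isOpen_lt (by fun_prop) (by fun_prop)).mem_nhds (by simp))
  have hjet := (hf₀.add hf₁).add htail
  rw [add_zero, add_zero] at hjet
  refine hjet.congr ?_
  filter_upwards [hS₀, hshift, hre] with s hs₀ hs₁ hs
  rw [binomialShiftSum_eq_sum_add_tail hS hs, ← hs₀, ← hs₁]
  simp [Finset.sum_range_succ]
  ring

namespace MellinDensity

lemma isBigO_tsum_remainderTerm (h : MellinDensity φ M) (hδ : 0 < δ)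
    (hz : remainderAbscissa p δ N < z.re) (hzN : z.re < N / 2 + 1) :
    (fun b => ∑' k, remainderTerm φ p δ b N k z) =O[atTop] fun b => 1 / b := by
  obtain ⟨C, hC⟩ := h.exists_abs_taylorRemainder_le N
  rw [remainderAbscissa_lt_iff hδ] at hz
  have hsum := summable_nat_add_one_rpow (e := p - N - 2 + δ * (N + 2 - 2 * z.re)) (by linarith)
  refine Asymptotics.IsBigO.trans (Asymptotics.IsBigO.of_bound (C / (N + 2 - 2 * z.re) *
    ∑' k : ℕ, ((k : ℝ) + 1) ^ (p - N - 2 + δ * (N + 2 - 2 * z.re))) ?_)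
    (isBigO_inv_pow_succ_atTop N)
  filter_upwards [eventually_gt_atTop 0] with b hb
  have hpow : b ^ (-(N + 1) : ℝ) = (b ^ (N + 1))⁻¹ := by
    rw [Real.rpow_neg hb.le]
    exact_mod_cast rfl
  refine (tsum_of_norm_bounded (hsum.mul_left _).hasSum
    fun k => norm_remainderTerm_le hC hb hδ le_rfl le_rfl hzN k).trans_eq ?_
  rw [hpow, tsum_mul_left, norm_inv, norm_pow, Complex.norm_of_nonneg hb.le]
  ring

lemma hasRemovableJet_mul_tsum_remainderTerm (h : MellinDensity φ M) (hδ : 0 < δ) (hb : 0 < b)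
    (hz : remainderAbscissa p δ N < z.re) (hzN : z.re < N / 2 + 1) (hw : HasRemovableJet w 0 w₁) :
    HasRemovableJet (fun s => w s * ∑' k, remainderTerm φ p δ b N k (s + z)) 0
      (w₁ * ∑' k, remainderTerm φ p δ b N k z) := by
  have hanalytic : AnalyticAt ℂ (fun s => ∑' k, remainderTerm φ p δ b N k (s + z)) 0 :=
    AnalyticAt.fun_comp (g := fun t => ∑' k, remainderTerm φ p δ b N k t)
      ((h.differentiableOn_tsum_remainderTerm hδ hb).analyticAt
        ((isOpen_re_strip _ _).mem_nhds (by simpa using ⟨hz, hzN⟩))) (by fun_prop)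
  simpa using hw.mul (hasRemovableJet_of_analyticAt hanalytic)

lemma exists_hasRemovableJet_mul_momentContinuation (h : MellinDensity φ M) (hδ : 0 < δ)
    (hz : remainderAbscissa p δ N < z.re) (hzN : z.re < N / 2 + 1) (hw : HasRemovableJet w 0 w₁)
    (hmain : HasRemovableJet (fun s => w s * (riemannZeta (2 * (s + z) - p) * M (s + z))) α₀ α₁)
    (hcoeff : ∀ m : ℕ, ∃ c d, HasRemovableJet (fun s => w s *
      (riemannZeta (2 * δ * (s + z) + ((1 - δ) * (m + 2) - p)) / (m + 2 - 2 * (s + z)))) c d) :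
    ∃ r : ℝ → ℂ, r =O[atTop] (fun b => 1 / b) ∧ ∀ b, 0 < b →
      ∃ c, HasRemovableJet (fun s => w s * momentContinuation φ M p δ b N (s + z)) c
        ((b : ℂ) ^ (1 - 2 * z) * (α₁ - 2 * Real.log b * α₀) + r b) := by
  choose c d hcd using hcoeff
  refine ⟨fun b => -∑ m ∈ Finset.range N, (taylorCoeff φ m / b ^ (m + 1) : ℂ) * d m -
    w₁ * ∑' k, remainderTerm φ p δ b N k z,
    (isBigO_sum_div_pow_succ_atTop _ _ d).neg_left.sub
      ((h.isBigO_tsum_remainderTerm hδ hz hzN).const_mul_left w₁), fun b hb => ?_⟩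
  have hjet := (((hasRemovableJet_cpow_sub_two_mul hb (1 - 2 * z)).mul hmain).sub
    (HasRemovableJet.sum (Finset.range N) fun m _ =>
      (hcd m).const_mul (taylorCoeff φ m / b ^ (m + 1)))).sub
        (h.hasRemovableJet_mul_tsum_remainderTerm hδ hb hz hzN hw)
  refine ⟨_, (hjet.congr (.of_forall fun s => ?_)).congr_deriv (by ring)⟩
  rw [momentContinuation, mul_sub, mul_sub, Finset.mul_sum]
  congr 2
  · ring_nf
  · exact Finset.sum_congr rfl fun m _ => by ring

lemma exists_hasRemovableJet_sinPiDivPi_mul_momentContinuation (h : MellinDensity φ M)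
    (hδ : 0 < δ) (hN : remainderAbscissa p δ N < 0)
    (hmain : HasRemovableJet (fun s => sinPiDivPi s * (riemannZeta (2 * s - p) * M s)) α₀ α₁) :
    ∃ r : ℝ → ℂ, r =O[atTop] (fun b => 1 / b) ∧ ∀ b, 0 < b →
      ∃ c, HasRemovableJet (fun s => sinPiDivPi s * momentContinuation φ M p δ b N s) c
        (b * (α₁ - 2 * Real.log b * α₀) + r b) := by
  have hcoeff : ∀ m : ℕ, ∃ c d, HasRemovableJet (fun s => sinPiDivPi s *
      (riemannZeta (2 * δ * s + ((1 - δ) * (m + 2) - p)) / (m + 2 - 2 * s))) c d := by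
    intro m
    obtain ⟨c, d, hzeta⟩ := exists_hasRemovableJet_sinPiDivPi_mul_riemannZeta
      (a := 2 * δ) (by simpa using hδ.ne') ((1 - δ) * (m + 2) - p)
    have hinv : AnalyticAt ℂ (fun s : ℂ => ((m : ℂ) + 2 - 2 * s)⁻¹) 0 :=
      AnalyticAt.fun_inv (by fun_prop) (by
        rw [mul_zero, sub_zero]; exact_mod_cast (m + 1).succ_ne_zero)
    refine ⟨_, _, (hzeta.mul (hasRemovableJet_of_analyticAt hinv)).congr
      (.of_forall fun s => ?_)⟩
    ring
  simpa using h.exists_hasRemovableJet_mul_momentContinuation (z := 0) hδ (by simpa using hN)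
    (by rw [Complex.zero_re]; positivity) hasRemovableJet_sinPiDivPi (by simpa using hmain)
    (by simpa using hcoeff)

lemma exists_hasRemovableJet_sinPiDivPi_mul_momentContinuation_add_one (h : MellinDensity φ M)
    (hδ : 0 < δ) (hN : remainderAbscissa p δ N < 1) (hN1 : 1 ≤ N)
    (hmain : HasRemovableJet
      (fun s => sinPiDivPi s * (s / 4) * (riemannZeta (2 * (s + 1) - p) * M (s + 1))) β₀ β₁) :
    ∃ r : ℝ → ℂ, r =O[atTop] (fun b => 1 / b) ∧ ∀ b, 0 < b → ∃ c, HasRemovableJet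
      (fun s => sinPiDivPi s * (s / 4) * momentContinuation φ M p δ b N (s + 1)) c
        ((b : ℂ)⁻¹ * (β₁ - 2 * Real.log b * β₀) + r b) := by
  have hcoeff : ∀ m : ℕ, ∃ c d, HasRemovableJet (fun s => sinPiDivPi s * (s / 4) *
      (riemannZeta (2 * δ * (s + 1) + ((1 - δ) * (m + 2) - p)) / (m + 2 - 2 * (s + 1)))) c d := by
    intro m
    obtain ⟨c, d, hzeta⟩ := exists_hasRemovableJet_sinPiDivPi_mul_riemannZeta
      (a := 2 * δ) (by simpa using hδ.ne') (2 * δ + ((1 - δ) * (m + 2) - p))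
    obtain ⟨c', d', hdiv⟩ := exists_hasRemovableJet_div_sub_two_mul m
    refine ⟨_, _, ((hzeta.mul hdiv).const_mul (1 / 4)).congr (.of_forall fun s => ?_)⟩
    ring_nf
  have hw := hasRemovableJet_sinPiDivPi_mul (f := fun s : ℂ => s / 4) (by fun_prop)
  have hinv (b : ℝ) : (b : ℂ) ^ (1 - 2 : ℂ) = (b : ℂ)⁻¹ := by
    rw [← Complex.cpow_neg_one]
    norm_num
  simpa [hinv] using h.exists_hasRemovableJet_mul_momentContinuation (z := 1) hδ
    (by simpa using hN) (by simpa using Nat.succ_le_iff.1 hN1) hw hmain hcoeff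

lemma exists_meromorphic_eq_tsum_kernelTerm (h : MellinDensity φ M) (hp : p ≤ 1) (hδ : 0 < δ)
    (hδ1 : δ < 1)
    (hα : HasRemovableJet (fun s => sinPiDivPi s * (riemannZeta (2 * s - p) * M s)) α₀ α₁)
    (hβ : HasRemovableJet
      (fun s => sinPiDivPi s * (s / 4) * (riemannZeta (2 * (s + 1) - p) * M (s + 1))) β₀ β₁) :
    ∃ (Z : ℝ → ℂ → ℂ) (r : ℝ → ℂ), r =O[atTop] (fun b => 1 / b) ∧ ∀ b, 0 < b →
      Meromorphic (Z b) ∧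
      (∀ s : ℂ, 1 < s.re → Z b s = sinPiDivPi s * ∑' k, kernelTerm φ p δ b k s) ∧
      ∃ c, HasRemovableJet (Z b) c
        (b * (α₁ - 2 * Real.log b * α₀) - 2 * (Real.log b / b) * β₀ + r b) := by
  obtain ⟨A, hA⟩ := h.exists_abs_le
  obtain ⟨N, hN1, hN, -⟩ := exists_remainderAbscissa_lt_and_lt p hδ hδ1 0
  have hN1' : remainderAbscissa p δ N < 1 := hN.trans one_pos
  obtain ⟨r₀, hr₀, hjet₀⟩ :=
    h.exists_hasRemovableJet_sinPiDivPi_mul_momentContinuation hδ hN hα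
  obtain ⟨r₁, hr₁, hjet₁⟩ :=
    h.exists_hasRemovableJet_sinPiDivPi_mul_momentContinuation_add_one hδ hN1' hN1 hβ
  choose! S hSnf hSeq hScont using fun b (hb : 0 < b) =>
    h.exists_meromorphicNFAt_eq_tsum_momentTerm (b := b) hp hδ hδ1 hb
  have hinv : (fun b : ℝ => β₁ * (b : ℂ)⁻¹) =O[atTop] fun b => 1 / b := by
    simpa using (isBigO_inv_pow_succ_atTop 0).const_mul_left β₁
  refine ⟨fun b s => sinPiDivPi s * binomialShiftSum (S b) s,
    fun b => β₁ * (b : ℂ)⁻¹ + r₀ b + r₁ b, (hinv.add hr₀).add hr₁, fun b hb => ?_⟩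
  have hSbound : ∀ σ, 1 < σ → ∃ K, ∀ t : ℂ, σ ≤ t.re → ‖S b t‖ ≤ K := fun σ hσ =>
    (exists_norm_tsum_momentTerm_le hA hp hδ hb σ hσ).imp fun K hK t ht =>
      (hSeq b hb t (hσ.trans_le ht)).symm ▸ hK t ht
  have hSdiff : DifferentiableOn ℂ (S b) {t | 1 < t.re} :=
    (h.differentiableOn_tsum_momentTerm hp hδ hb).congr fun t ht => hSeq b hb t ht
  refine ⟨?_, fun s hs => ?_, ?_⟩
  · exact fun s => (differentiable_sinPiDivPi.analyticAt s).meromorphicAt.mul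
      (meromorphic_binomialShiftSum hSbound hSdiff (fun t => (hSnf b hb t).meromorphicAt) s)
  · rw [tsum_kernelTerm_eq_binomialShiftSum h.continuous hA hp hδ hb (hSeq b hb) hs]
  · obtain ⟨c, hc⟩ := hjet₀ b hb
    obtain ⟨c', hc'⟩ := hjet₁ b hb
    have hjet := hasRemovableJet_sinPiDivPi_mul_binomialShiftSum hSbound hSdiff
      (hScont b hb N hN1 0 (by simpa) (by rw [Complex.zero_re]; positivity))
      (hScont b hb N hN1 1 (by simpa) (by simpa using Nat.succ_le_iff.1 hN1)) hc hc'
    exact ⟨_, hjet.congr_deriv (by ring)⟩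

end MellinDensity

end JetOfKernelSeries

section HalfLineBetaIntegral

lemma hasDerivAt_sq_div_one_add_sq (v : ℝ) :
    HasDerivAt (fun v : ℝ => v ^ 2 / (1 + v ^ 2)) (2 * v / (1 + v ^ 2) ^ 2) v := by
  have hquot := (hasDerivAt_pow 2 v).fun_div ((hasDerivAt_pow 2 v).const_add 1)
    (by positivity : 1 + v ^ 2 ≠ 0)
  refine hquot.congr_deriv ?_
  norm_num
  ring

lemma image_sq_div_one_add_sq_Ioi :
    (fun v : ℝ => v ^ 2 / (1 + v ^ 2)) '' Set.Ioi 0 = Set.Ioo 0 1 := by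
  ext x
  constructor
  · rintro ⟨v, hv : 0 < v, rfl⟩
    exact ⟨by positivity, (div_lt_one (by positivity)).2 (by linarith)⟩
  · rintro ⟨h0, h1⟩
    have h1x : 0 < 1 - x := by linarith
    refine ⟨√(x / (1 - x)), Real.sqrt_pos.2 (by positivity), ?_⟩
    simp only [Real.sq_sqrt (div_pos h0 h1x).le]
    field_simp
    ring

lemma injOn_sq_div_one_add_sq_Ioi : Set.InjOn (fun v : ℝ => v ^ 2 / (1 + v ^ 2)) (Set.Ioi 0) := by
  intro v hv w hw hvw
  simp only [div_eq_div_iff (by positivity : 1 + v ^ 2 ≠ 0) (by positivity : 1 + w ^ 2 ≠ 0)] at hvw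
  exact (pow_left_inj₀ (le_of_lt hv) (le_of_lt hw) two_ne_zero).1 (by linarith)

lemma abs_deriv_smul_betaIntegrand (a c : ℂ) {v : ℝ} (hv : 0 < v) :
    |2 * v / (1 + v ^ 2) ^ 2| • (((v ^ 2 / (1 + v ^ 2) : ℝ) : ℂ) ^ (a - 1) *
        (1 - ((v ^ 2 / (1 + v ^ 2) : ℝ) : ℂ)) ^ (c - 1)) =
      2 * ((v : ℂ) ^ (2 * a - 1) * ((1 + v ^ 2 : ℝ) : ℂ) ^ (-(a + c))) := by
  have hv1 : 0 < 1 + v ^ 2 := by positivity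
  have hv0 : (v : ℂ) ≠ 0 := Complex.ofReal_ne_zero.2 hv.ne'
  have hv1c : ((1 + v ^ 2 : ℝ) : ℂ) ≠ 0 := Complex.ofReal_ne_zero.2 hv1.ne'
  have hcompl : 1 - ((v ^ 2 / (1 + v ^ 2) : ℝ) : ℂ) = (((1 + v ^ 2)⁻¹ : ℝ) : ℂ) := by
    rw [← Complex.ofReal_one, ← Complex.ofReal_sub]
    congr 1
    field_simp
    ring
  have hjacobian : ((2 * v / (1 + v ^ 2) ^ 2 : ℝ) : ℂ) =
      2 * ((v : ℂ) ^ (1 : ℂ) * ((1 + v ^ 2 : ℝ) : ℂ) ^ (-2 : ℂ)) := by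
    rw [Complex.cpow_one, Complex.cpow_neg, Complex.cpow_ofNat]
    push_cast
    ring
  have hexp_v : 2 * a - 1 = 1 + 2 * (a - 1) := by ring
  have hexp_v1 : -(a + c) = -2 + (-(a - 1) + -(c - 1)) := by ring
  have hsq (z : ℂ) : ((v ^ 2 : ℝ) : ℂ) ^ z = (v : ℂ) ^ (2 * z) := by
    simpa using rpow_cpow hv 2 z
  rw [abs_of_pos (by positivity), Complex.real_smul, hjacobian, hcompl, Complex.ofReal_div,
    Complex.div_cpow_ofReal_nonneg (sq_nonneg v) hv1.le, Complex.ofReal_inv,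
    Complex.inv_cpow_ofReal_nonneg hv1.le, hsq, hexp_v, hexp_v1, Complex.cpow_add _ _ hv0,
    Complex.cpow_add _ _ hv1c, Complex.cpow_add _ _ hv1c, Complex.cpow_neg _ (a - 1),
    Complex.cpow_neg _ (c - 1)]
  ring

variable {a c : ℂ}

lemma integrableOn_Ioi_cpow_mul_one_add_sq_cpow (ha : 0 < a.re) (hc : 0 < c.re) :
    IntegrableOn (fun v : ℝ => (v : ℂ) ^ (2 * a - 1) * ((1 + v ^ 2 : ℝ) : ℂ) ^ (-(a + c)))
      (Set.Ioi 0) := by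
  have hbeta := Complex.betaIntegral_convergent ha hc
  rw [intervalIntegrable_iff_integrableOn_Ioo_of_le zero_le_one, ← image_sq_div_one_add_sq_Ioi,
    integrableOn_image_iff_integrableOn_abs_deriv_smul measurableSet_Ioi
      (fun v _ => (hasDerivAt_sq_div_one_add_sq v).hasDerivWithinAt)
      injOn_sq_div_one_add_sq_Ioi] at hbeta
  refine (integrable_const_mul_iff (c := (2 : ℂ)) (by simp) _).1 ?_
  exact hbeta.congr_fun (fun v hv => abs_deriv_smul_betaIntegrand a c hv) measurableSet_Ioi

lemma integral_Ioi_cpow_mul_one_add_sq_cpow (ha : 0 < a.re) (hc : 0 < c.re) :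
    ∫ v in Set.Ioi (0 : ℝ), (v : ℂ) ^ (2 * a - 1) * ((1 + v ^ 2 : ℝ) : ℂ) ^ (-(a + c)) =
      1 / 2 * (Complex.Gamma a * Complex.Gamma c / Complex.Gamma (a + c)) := by
  have hsubst := integral_image_eq_integral_abs_deriv_smul measurableSet_Ioi
    (fun v _ => (hasDerivAt_sq_div_one_add_sq v).hasDerivWithinAt) injOn_sq_div_one_add_sq_Ioi
    (fun x : ℝ => (x : ℂ) ^ (a - 1) * (1 - (x : ℂ)) ^ (c - 1))
  rw [image_sq_div_one_add_sq_Ioi, setIntegral_congr_fun measurableSet_Ioi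
    (fun v hv => abs_deriv_smul_betaIntegrand a c hv), integral_const_mul] at hsubst
  rw [← Complex.betaIntegral_eq_Gamma_mul_div a c ha hc, Complex.betaIntegral,
    intervalIntegral.integral_of_le zero_le_one, integral_Ioc_eq_integral_Ioo, hsubst]
  ring

end HalfLineBetaIntegral

section MellinIntegrationByParts

variable {φ φ' : ℝ → ℝ} {A B r r' : ℝ} {t : ℂ}

lemma tendsto_cpow_mul_atTop (hA : ∀ x, 0 < x → |φ x| ≤ A * x ^ r) (ht : r < 2 * t.re) :
    Tendsto (fun x : ℝ => (x : ℂ) ^ (-2 * t) * (φ x : ℂ)) atTop (𝓝 0) := by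
  have hpow := (tendsto_rpow_neg_atTop (y := 2 * t.re - r) (by linarith)).const_mul A
  rw [mul_zero, neg_sub] at hpow
  refine squeeze_zero_norm' ?_ hpow
  filter_upwards [eventually_gt_atTop 0] with x hx
  exact norm_cpow_neg_two_mul_mul_le hA hx

lemma tendsto_cpow_mul_nhdsGT_zero (hA : ∀ x, 0 < x → |φ x| ≤ A * x ^ r) (ht : 2 * t.re < r) :
    Tendsto (fun x : ℝ => (x : ℂ) ^ (-2 * t) * (φ x : ℂ)) (𝓝[>] 0) (𝓝 0) := by
  have hexp : 0 < r - 2 * t.re := by linarith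
  have hpow : Tendsto (fun x : ℝ => A * x ^ (r - 2 * t.re)) (𝓝[>] 0)
      (𝓝 (A * 0 ^ (r - 2 * t.re))) :=
    ((Real.continuousAt_rpow_const 0 _ (Or.inr hexp.le)).tendsto.mono_left
      nhdsWithin_le_nhds).const_mul A
  rw [Real.zero_rpow hexp.ne', mul_zero] at hpow
  refine squeeze_zero_norm' ?_ hpow
  filter_upwards [self_mem_nhdsWithin] with x hx
  exact norm_cpow_neg_two_mul_mul_le hA hx

lemma integrableOn_Ioi_zero_cpow_mul (hφ : Continuous φ) (hA : ∀ x, 0 < x → |φ x| ≤ A * x ^ r)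
    (hB : ∀ x, 0 < x → |φ x| ≤ B * x ^ r') (hr : r + 1 < 2 * t.re) (hr' : 2 * t.re < r' + 1) :
    IntegrableOn (fun x : ℝ => (x : ℂ) ^ (-2 * t) * (φ x : ℂ)) (Set.Ioi 0) := by
  rw [← Set.Ioc_union_Ioi_eq_Ioi zero_le_one]
  exact (integrableOn_Ioc_cpow_mul hφ hB hr').union (integrableOn_Ioi_cpow_mul hφ hA one_pos hr)

lemma integral_Ioi_cpow_mul_eq_of_hasDerivAt (hφ : ∀ x, HasDerivAt φ (φ' x) x)
    (hA : ∀ x, 0 < x → |φ x| ≤ A * x ^ r) (hB : ∀ x, 0 < x → |φ x| ≤ B * x ^ r')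
    (hr : r + 1 < 2 * t.re) (hr' : 2 * t.re < r' + 1) (ht : 2 * t - 1 ≠ 0)
    (hint : IntegrableOn (fun x : ℝ => (x : ℂ) ^ (1 - 2 * t) * (φ' x : ℂ)) (Set.Ioi 0)) :
    ∫ x in Set.Ioi (0 : ℝ), (x : ℂ) ^ (-2 * t) * (φ x : ℂ) =
      (∫ x in Set.Ioi (0 : ℝ), (x : ℂ) ^ (1 - 2 * t) * (φ' x : ℂ)) / (2 * t - 1) := by
  have ht' : 1 - 2 * t ≠ 0 := sub_ne_zero.2 (sub_ne_zero.1 ht).symm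
  have hφc : Continuous φ := continuous_iff_continuousAt.2 fun x => (hφ x).continuousAt
  have hpow : ∀ x ∈ Set.Ioi (0 : ℝ),
      HasDerivAt (fun x : ℝ => (x : ℂ) ^ (1 - 2 * t) / (1 - 2 * t)) ((x : ℂ) ^ (-2 * t)) x := by
    intro x hx
    refine ((hasDerivAt_ofReal_cpow_const (ne_of_gt hx) ht').div_const (1 - 2 * t)).congr_deriv ?_
    rw [mul_div_cancel_left₀ _ ht']
    ring_nf
  have hboundary : (fun x => (φ x : ℂ)) * (fun x : ℝ => (x : ℂ) ^ (1 - 2 * t) / (1 - 2 * t)) =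
      fun x : ℝ => (x : ℂ) ^ (-2 * (t - 1 / 2)) * (φ x : ℂ) / (1 - 2 * t) := by
    ext x
    simp only [Pi.mul_apply]
    ring_nf
  have hzero := (tendsto_cpow_mul_nhdsGT_zero (t := t - 1 / 2) hB
    (by norm_num; linarith)).div_const (1 - 2 * t)
  have htop := (tendsto_cpow_mul_atTop (t := t - 1 / 2) hA
    (by norm_num; linarith)).div_const (1 - 2 * t)
  rw [← hboundary] at hzero htop
  have hparts := integral_Ioi_mul_deriv_eq_deriv_mul (fun x _ => (hφ x).ofReal_comp) hpow
    ((integrableOn_Ioi_zero_cpow_mul hφc hA hB hr hr').congr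
      (.of_forall fun x => mul_comm _ _))
    ((hint.div_const (1 - 2 * t)).congr (.of_forall fun x => by
      simp only [Pi.mul_apply]; ring)) hzero htop
  simp only [mul_comm (φ _ : ℂ), mul_comm (φ' _ : ℂ), div_mul_eq_mul_div, integral_div] at hparts
  rw [hparts, sub_self, zero_sub, ← div_neg, neg_sub]

end MellinIntegrationByParts

section GammaFunction

variable {g : ℂ → ℂ} {z : ℂ}

lemma meromorphic_Gamma_comp (hg : Differentiable ℂ g) :
    Meromorphic fun t => Complex.Gamma (g t) := fun z =>
  (Meromorphic.Gamma (g z)).comp_analyticAt (hg.analyticAt z)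

lemma ne_neg_natCast_of_neg_one_lt_re (hz : -1 < z.re) (hz0 : z.re ≠ 0) (m : ℕ) : z ≠ -m := by
  rintro rfl
  simp only [Complex.neg_re, Complex.natCast_re, neg_lt_neg_iff, ne_eq, neg_eq_zero] at hz hz0
  norm_cast at hz hz0
  lia

lemma analyticAt_Gamma_comp (hg : AnalyticAt ℂ g z) (hz : -1 < (g z).re) (hz0 : (g z).re ≠ 0) :
    AnalyticAt ℂ (fun t => Complex.Gamma (g t)) z :=
  AnalyticAt.fun_comp (g := Complex.Gamma) ((Meromorphic.Gamma (g z)).analyticAt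
    (Complex.differentiableAt_Gamma _ (ne_neg_natCast_of_neg_one_lt_re hz hz0)).continuousAt) hg

lemma Gamma_one_half_ne_zero : Complex.Gamma (1 / 2) ≠ 0 :=
  Complex.Gamma_ne_zero_of_re_pos (by norm_num)

lemma mul_Gamma_one_sub_add_one (hz : z ≠ 0) :
    z * Complex.Gamma (1 - (z + 1)) = -Complex.Gamma (1 - z) := by
  have hrec := Complex.Gamma_add_one (-z) (neg_ne_zero.2 hz)
  rw [neg_add_eq_sub] at hrec
  rw [hrec, sub_add_cancel_right, neg_mul, neg_neg]

end GammaFunction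

section CuspDensities

/-- The density of `E_{0,k}` after rescaling `u = 2πa v`. -/
noncomputable def cuspDensity0 (v : ℝ) : ℝ := v / (1 + v ^ 2)

/-- The density of `E_{2,k}` after rescaling `u = 2πa v`; that of `E_{1,k}` is `Real.arsinh`. -/
noncomputable def cuspDensity2 (v : ℝ) : ℝ :=
  (v * (1 + v ^ 2) ^ (-(3 : ℝ) / 2) / 24) * (13 - 15 * v ^ 2 * (1 + v ^ 2)⁻¹)

/-- The Mellin transform of `cuspDensity0`. -/
noncomputable def cuspMellin0 (t : ℂ) : ℂ := 1 / 2 * (Complex.Gamma (1 - t) * Complex.Gamma t)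

/-- The Mellin transform of `Real.arsinh`. -/
noncomputable def cuspMellin1 (t : ℂ) : ℂ :=
  1 / 2 * (Complex.Gamma (1 - t) * Complex.Gamma (t - 1 / 2) / Complex.Gamma (1 / 2)) / (2 * t - 1)

/-- The Mellin transform of `cuspDensity2`. -/
noncomputable def cuspMellin2 (t : ℂ) : ℂ :=
  Complex.Gamma (1 - t) * Complex.Gamma (t + 1 / 2) * (10 * t + 3) /
    (24 * Complex.Gamma (1 / 2))

variable {u : ℝ} {t : ℂ}

lemma abs_cuspDensity0_le (hu : 0 < u) : |cuspDensity0 u| ≤ 1 * u ^ (1 / 2 : ℝ) := by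
  rw [cuspDensity0, abs_of_pos (by positivity), one_mul, ← Real.sqrt_eq_rpow,
    div_le_iff₀ (by positivity)]
  have hsqrt : √u ≤ 1 + u ^ 2 := by
    nlinarith [Real.mul_self_sqrt hu.le, sq_nonneg (√u - 1), sq_nonneg (u - 1)]
  calc u = √u * √u := (Real.mul_self_sqrt hu.le).symm
    _ ≤ √u * (1 + u ^ 2) := by gcongr

lemma abs_cuspDensity2_le (hu : 0 < u) : |cuspDensity2 u| ≤ 2 * |cuspDensity0 u| := by
  have hfrac : u ^ 2 * (1 + u ^ 2)⁻¹ ≤ 1 := by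
    rw [← div_eq_mul_inv, div_le_one (by positivity)]
    linarith
  have hpoly : |13 - 15 * u ^ 2 * (1 + u ^ 2)⁻¹| ≤ 28 := by
    have hfrac0 : 0 ≤ u ^ 2 * (1 + u ^ 2)⁻¹ := by positivity
    rw [abs_le]
    constructor <;> linarith
  have hpow : (1 + u ^ 2) ^ (-(3 : ℝ) / 2) ≤ (1 + u ^ 2)⁻¹ := by
    rw [← Real.rpow_neg_one]
    exact Real.rpow_le_rpow_of_exponent_le (by nlinarith) (by norm_num)
  have hpos : 0 < u * (1 + u ^ 2)⁻¹ := by positivity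
  rw [cuspDensity2, cuspDensity0, abs_mul, abs_of_pos (by positivity), div_eq_mul_inv u,
    abs_of_pos hpos]
  calc u * (1 + u ^ 2) ^ (-(3 : ℝ) / 2) / 24 * |13 - 15 * u ^ 2 * (1 + u ^ 2)⁻¹|
      ≤ u * (1 + u ^ 2)⁻¹ / 24 * 28 := by gcongr
    _ ≤ 2 * (u * (1 + u ^ 2)⁻¹) := by linarith

lemma abs_arsinh_le_self (hu : 0 < u) : |Real.arsinh u| ≤ 1 * u ^ (1 : ℝ) := by
  have hpos := Real.arsinh_pos_iff.2 hu
  rw [abs_of_pos hpos, one_mul, Real.rpow_one]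
  simpa using Real.self_le_sinh_iff.2 hpos.le

lemma abs_arsinh_le_two_mul_sqrt (hu : 0 < u) : |Real.arsinh u| ≤ 2 * u ^ (1 / 2 : ℝ) := by
  have hpos := Real.arsinh_pos_iff.2 hu
  have hsinh : u = (Real.exp (Real.arsinh u) - Real.exp (-Real.arsinh u)) / 2 := by
    rw [← Real.sinh_eq, Real.sinh_arsinh]
  have hexp := Real.quadratic_le_exp_of_nonneg hpos.le
  have hexp_neg : Real.exp (-Real.arsinh u) ≤ 1 := Real.exp_le_one_iff.2 (by linarith)
  have hsq : (Real.arsinh u / 2) ^ 2 ≤ u := by nlinarith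
  rw [abs_of_pos hpos, ← Real.sqrt_eq_rpow]
  linarith [Real.le_sqrt_of_sq_le hsq]

lemma cpow_neg_two_mul_mul_self {v : ℝ} (hv : 0 < v) (t : ℂ) :
    (v : ℂ) ^ (-2 * t) * v = (v : ℂ) ^ (2 * (1 - t) - 1) := by
  have hexp : 2 * (1 - t) - 1 = -2 * t + 1 := by ring
  rw [hexp, Complex.cpow_add _ _ (Complex.ofReal_ne_zero.2 hv.ne'), Complex.cpow_one]

lemma integral_Ioi_cpow_mul_cuspDensity0 (ht0 : 0 < t.re) (ht1 : t.re < 1) :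
    ∫ v in Set.Ioi (0 : ℝ), (v : ℂ) ^ (-2 * t) * (cuspDensity0 v : ℂ) = cuspMellin0 t := by
  have hbeta := integral_Ioi_cpow_mul_one_add_sq_cpow (a := 1 - t) (by simpa) ht0
  rw [sub_add_cancel, Complex.Gamma_one, div_one] at hbeta
  rw [cuspMellin0, ← hbeta]
  refine setIntegral_congr_fun measurableSet_Ioi fun v hv => ?_
  simp only [← cpow_neg_two_mul_mul_self hv, cuspDensity0, Complex.cpow_neg_one]
  push_cast
  ring

lemma cpow_mul_cuspDensity2_eq {v : ℝ} (hv : 0 < v) (t : ℂ) :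
    (v : ℂ) ^ (-2 * t) * (cuspDensity2 v : ℂ) =
      -2 / 24 * ((v : ℂ) ^ (2 * (1 - t) - 1) * ((1 + v ^ 2 : ℝ) : ℂ) ^ (-(1 / 2 + 1 : ℂ))) +
      15 / 24 * ((v : ℂ) ^ (2 * (1 - t) - 1) *
        ((1 + v ^ 2 : ℝ) : ℂ) ^ (-(1 / 2 + 1 + 1 : ℂ))) := by
  have hpos : 0 < 1 + v ^ 2 := by positivity
  have hcast : ((1 + v ^ 2 : ℝ) : ℂ) ^ (-(1 / 2 + 1 : ℂ)) =
      (((1 + v ^ 2) ^ (-(3 : ℝ) / 2) : ℝ) : ℂ) := by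
    rw [Complex.ofReal_cpow hpos.le]
    congr 1
    push_cast
    norm_num
  have hfactor : 13 - 15 * v ^ 2 * (1 + v ^ 2)⁻¹ = -2 + 15 * (1 + v ^ 2)⁻¹ := by
    field_simp
    ring
  rw [← cpow_neg_two_mul_mul_self hv, neg_add (1 / 2 + 1 : ℂ) 1, ← sub_eq_add_neg,
    Complex.cpow_sub _ _ (Complex.ofReal_ne_zero.2 hpos.ne'), Complex.cpow_one, hcast,
    cuspDensity2, hfactor]
  push_cast
  ring

lemma integral_Ioi_cpow_mul_cuspDensity2 (ht0 : -1 / 2 < t.re) (ht1 : t.re < 1) :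
    ∫ v in Set.Ioi (0 : ℝ), (v : ℂ) ^ (-2 * t) * (cuspDensity2 v : ℂ) = cuspMellin2 t := by
  have hre : 0 < (1 - t).re := by simpa
  have hre2 : 0 < (t + 1 / 2).re := by norm_num; linarith
  have hre3 : 0 < (t + 1 / 2 + 1).re := by norm_num; linarith
  have hsum2 : 1 - t + (t + 1 / 2) = 1 / 2 + 1 := by ring
  have hsum3 : 1 - t + (t + 1 / 2 + 1) = 1 / 2 + 1 + 1 := by ring
  have hint2 := integrableOn_Ioi_cpow_mul_one_add_sq_cpow hre hre2
  have hint3 := integrableOn_Ioi_cpow_mul_one_add_sq_cpow hre hre3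
  have hbeta2 := integral_Ioi_cpow_mul_one_add_sq_cpow hre hre2
  have hbeta3 := integral_Ioi_cpow_mul_one_add_sq_cpow hre hre3
  rw [hsum2] at hint2 hbeta2
  rw [hsum3] at hint3 hbeta3
  have hne : t + 1 / 2 ≠ 0 := fun h => hre2.ne' (by rw [h, Complex.zero_re])
  rw [setIntegral_congr_fun measurableSet_Ioi fun v hv => cpow_mul_cuspDensity2_eq hv t,
    integral_add (hint2.const_mul _) (hint3.const_mul _), integral_const_mul, integral_const_mul,
    hbeta2, hbeta3, cuspMellin2, Complex.Gamma_add_one _ hne,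
    Complex.Gamma_add_one (1 / 2 + 1) (by norm_num), Complex.Gamma_add_one (1 / 2) (by norm_num)]
  have := Gamma_one_half_ne_zero
  generalize Complex.Gamma (1 / 2) = G at *
  field_simp
  ring

lemma cpow_mul_inv_sqrt_one_add_sq (v : ℝ) (t : ℂ) :
    (v : ℂ) ^ (1 - 2 * t) * (((√(1 + v ^ 2))⁻¹ : ℝ) : ℂ) =
      (v : ℂ) ^ (2 * (1 - t) - 1) * ((1 + v ^ 2 : ℝ) : ℂ) ^ (-(1 - t + (t - 1 / 2))) := by
  have hpos : 0 < 1 + v ^ 2 := by positivity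
  rw [Real.sqrt_eq_rpow, ← Real.rpow_neg hpos.le, Complex.ofReal_cpow hpos.le]
  congr 2
  · ring
  · push_cast
    ring

lemma integral_Ioi_cpow_mul_arsinh (ht0 : 3 / 4 < t.re) (ht1 : t.re < 1) :
    ∫ v in Set.Ioi (0 : ℝ), (v : ℂ) ^ (-2 * t) * (Real.arsinh v : ℂ) = cuspMellin1 t := by
  have hre : 0 < (1 - t).re := by simpa
  have hre' : 0 < (t - 1 / 2).re := by norm_num; linarith
  have hne : 2 * t - 1 ≠ 0 := fun h => hre'.ne' (by
    rw [show t - 1 / 2 = (2 * t - 1) / 2 by ring, h, zero_div, Complex.zero_re])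
  have hint := integrableOn_Ioi_cpow_mul_one_add_sq_cpow hre hre'
  have hbeta := integral_Ioi_cpow_mul_one_add_sq_cpow hre hre'
  simp only [← cpow_mul_inv_sqrt_one_add_sq] at hint hbeta
  rw [integral_Ioi_cpow_mul_eq_of_hasDerivAt Real.hasDerivAt_arsinh
    (fun x hx => abs_arsinh_le_two_mul_sqrt hx) (fun x hx => abs_arsinh_le_self hx)
    (by linarith) (by linarith) hne hint, hbeta, cuspMellin1]
  ring_nf

lemma analyticAt_cuspMellin0 (ht0 : 0 < t.re) (ht2 : t.re < 2) (ht1 : t.re ≠ 1) :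
    AnalyticAt ℂ cuspMellin0 t := by
  have hGamma₁ := analyticAt_Gamma_comp (g := fun t => 1 - t) (z := t) (by fun_prop)
    (by simp; linarith) (by simpa [sub_eq_zero] using ht1.symm)
  have hGamma₂ := analyticAt_Gamma_comp (g := fun t => t) (z := t) (by fun_prop)
    (by linarith) ht0.ne'
  exact analyticAt_const.mul (hGamma₁.mul hGamma₂)

lemma analyticAt_cuspMellin1 (ht0 : -1 / 2 < t.re) (ht2 : t.re < 2) (ht1 : t.re ≠ 1)
    (ht : t.re ≠ 1 / 2) : AnalyticAt ℂ cuspMellin1 t := by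
  have hGamma₁ := analyticAt_Gamma_comp (g := fun t => 1 - t) (z := t) (by fun_prop)
    (by simp; linarith) (by simpa [sub_eq_zero] using ht1.symm)
  have hGamma₂ := analyticAt_Gamma_comp (g := fun t => t - 1 / 2) (z := t) (by fun_prop)
    (by norm_num; linarith) (by simpa [sub_eq_zero] using ht)
  have hne : 2 * t - 1 ≠ 0 := fun h => ht (by
    rw [show t = 1 / 2 by linear_combination h / 2]
    norm_num)
  exact (analyticAt_const.mul ((hGamma₁.mul hGamma₂).div analyticAt_const
    Gamma_one_half_ne_zero)).div (by fun_prop) hne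

lemma analyticAt_cuspMellin2 (ht0 : -3 / 2 < t.re) (ht2 : t.re < 2) (ht1 : t.re ≠ 1)
    (ht : t.re ≠ -1 / 2) : AnalyticAt ℂ cuspMellin2 t := by
  have hGamma₁ := analyticAt_Gamma_comp (g := fun t => 1 - t) (z := t) (by fun_prop)
    (by simp; linarith) (by simpa [sub_eq_zero] using ht1.symm)
  have hGamma₂ := analyticAt_Gamma_comp (g := fun t => t + 1 / 2) (z := t) (by fun_prop)
    (by norm_num; linarith) (by norm_num; contrapose! ht; linarith)
  exact ((hGamma₁.mul hGamma₂).mul (by fun_prop)).div analyticAt_const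
    (mul_ne_zero (by norm_num) Gamma_one_half_ne_zero)

lemma mellinDensity_cuspDensity0 : MellinDensity cuspDensity0 cuspMellin0 where
  contDiff n := contDiff_id.div (by fun_prop) fun v => by positivity
  map_zero := by simp [cuspDensity0]
  exists_abs_le_sqrt := ⟨1, fun u hu => abs_cuspDensity0_le hu⟩
  meromorphic t := (MeromorphicAt.const (1 / 2 : ℂ) t).mul
    ((meromorphic_Gamma_comp (by fun_prop) t).mul (meromorphic_Gamma_comp (by fun_prop) t))
  mellin_eq t ht ht1 := integral_Ioi_cpow_mul_cuspDensity0 (by linarith) ht1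
  differentiableOn t ht := by
    obtain ⟨ht1, ht2⟩ := ht
    exact (analyticAt_cuspMellin0 (by linarith) (by linarith)
      (by linarith)).differentiableAt.differentiableWithinAt

lemma mellinDensity_arsinh : MellinDensity Real.arsinh cuspMellin1 where
  contDiff n := contDiff_id.arsinh
  map_zero := Real.arsinh_zero
  exists_abs_le_sqrt := ⟨2, fun u hu => abs_arsinh_le_two_mul_sqrt hu⟩
  meromorphic t := ((MeromorphicAt.const (1 / 2 : ℂ) t).mul
    (((meromorphic_Gamma_comp (by fun_prop) t).mul (meromorphic_Gamma_comp (by fun_prop) t)).div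
      (.const _ t))).div (AnalyticAt.meromorphicAt (by fun_prop))
  mellin_eq t ht ht1 := integral_Ioi_cpow_mul_arsinh ht ht1
  differentiableOn t ht := by
    obtain ⟨ht1, ht2⟩ := ht
    exact (analyticAt_cuspMellin1 (by linarith) (by linarith) (by linarith)
      (by linarith)).differentiableAt.differentiableWithinAt

lemma mellinDensity_cuspDensity2 : MellinDensity cuspDensity2 cuspMellin2 where
  contDiff n := by
    have hne (v : ℝ) : 1 + v ^ 2 ≠ 0 := by positivity
    unfold cuspDensity2
    fun_prop (disch := assumption)
  map_zero := by simp [cuspDensity2]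
  exists_abs_le_sqrt := ⟨2, fun u hu => by
    linarith [abs_cuspDensity2_le hu, abs_cuspDensity0_le hu]⟩
  meromorphic t := (((meromorphic_Gamma_comp (by fun_prop) t).mul
    (meromorphic_Gamma_comp (by fun_prop) t)).mul (AnalyticAt.meromorphicAt (by fun_prop))).div
      (.const _ t)
  mellin_eq t ht ht1 := integral_Ioi_cpow_mul_cuspDensity2 (by linarith) ht1
  differentiableOn t ht := by
    obtain ⟨ht1, ht2⟩ := ht
    exact (analyticAt_cuspMellin2 (by linarith) (by linarith) (by linarith)
      (by linarith)).differentiableAt.differentiableWithinAt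

end CuspDensities

section CuspJets

variable {s : ℂ}

lemma eventually_sinPiDivPi_ne_zero : ∀ᶠ s in 𝓝[≠] (0 : ℂ), sinPiDivPi s ≠ 0 :=
  hasDerivAt_sinPiDivPi_zero.eventually_ne one_ne_zero

lemma sinPiDivPi_mul_cuspMellin0 (hs : sinPiDivPi s ≠ 0) :
    sinPiDivPi s * cuspMellin0 s = 1 / 2 := by
  have hpi : (Real.pi : ℂ) ≠ 0 := Complex.ofReal_ne_zero.2 Real.pi_ne_zero
  have hsin : Complex.sin (Real.pi * s) ≠ 0 := (div_ne_zero_iff.1 hs).1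
  rw [cuspMellin0, mul_comm (Complex.Gamma (1 - s)), Complex.Gamma_mul_Gamma_one_sub, sinPiDivPi]
  field_simp

lemma cuspMellin0_add_one (hs : s ≠ 0) : cuspMellin0 (s + 1) = -cuspMellin0 s := by
  rw [cuspMellin0, cuspMellin0, Complex.Gamma_add_one s hs]
  linear_combination (1 / 2) * Complex.Gamma s * mul_Gamma_one_sub_add_one hs

lemma mul_cuspMellin1_add_one (hs : s ≠ 0) :
    s * cuspMellin1 (s + 1) =
      -(1 / 2) * (Complex.Gamma (1 - s) * Complex.Gamma (s + 1 / 2) / Complex.Gamma (1 / 2)) /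
        (2 * s + 1) := by
  have hgamma : s + 1 - 1 / 2 = s + 1 / 2 := by ring
  have hden : 2 * (s + 1) - 1 = 2 * s + 1 := by ring
  rw [cuspMellin1, hgamma, hden]
  linear_combination (1 / 2 * (Complex.Gamma (s + 1 / 2) / Complex.Gamma (1 / 2)) / (2 * s + 1)) *
    mul_Gamma_one_sub_add_one hs

lemma mul_cuspMellin2_add_one (hs : s ≠ 0) :
    s * cuspMellin2 (s + 1) =
      -(Complex.Gamma (1 - s) * Complex.Gamma (s + 3 / 2) * (10 * s + 13) /
        (24 * Complex.Gamma (1 / 2))) := by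
  have hgamma : s + 1 + 1 / 2 = s + 3 / 2 := by ring
  rw [cuspMellin2, hgamma]
  linear_combination (Complex.Gamma (s + 3 / 2) * (10 * s + 13) / (24 * Complex.Gamma (1 / 2))) *
    mul_Gamma_one_sub_add_one hs

lemma cuspMellin1_zero : cuspMellin1 0 = 1 := by
  have hne := Gamma_one_half_ne_zero
  have hgamma : Complex.Gamma (0 - 1 / 2) = -2 * Complex.Gamma (1 / 2) := by
    have hrec := Complex.Gamma_add_one (0 - 1 / 2) (by norm_num)
    rw [(by norm_num : (0 - 1 / 2 + 1 : ℂ) = 1 / 2)] at hrec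
    rw [hrec]
    ring
  rw [cuspMellin1, sub_zero, Complex.Gamma_one, hgamma]
  field_simp
  norm_num

lemma cuspMellin2_zero : cuspMellin2 0 = 1 / 8 := by
  have hne := Gamma_one_half_ne_zero
  rw [cuspMellin2, sub_zero, Complex.Gamma_one, zero_add]
  field_simp
  norm_num

lemma hasRemovableJet_sinPiDivPi_mul_cuspMellin0 :
    HasRemovableJet (fun s => sinPiDivPi s * cuspMellin0 s) (1 / 2) 0 := by
  have hconst := hasRemovableJet_of_analyticAt (f := fun _ => 1 / 2) analyticAt_const
  refine (hconst.congr_deriv (deriv_const _ _)).congr ?_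
  filter_upwards [eventually_sinPiDivPi_ne_zero] with s hs using sinPiDivPi_mul_cuspMellin0 hs

lemma exists_hasRemovableJet_mul_cuspMellin1_add_one :
    ∃ d, HasRemovableJet (fun s => s * cuspMellin1 (s + 1)) (-1 / 2) d := by
  have hne := Gamma_one_half_ne_zero
  have hgamma : AnalyticAt ℂ (fun s : ℂ => Complex.Gamma (1 - s)) 0 :=
    analyticAt_Gamma_comp (by fun_prop) (by norm_num) (by norm_num)
  have hgamma' : AnalyticAt ℂ (fun s : ℂ => Complex.Gamma (s + 1 / 2)) 0 :=
    analyticAt_Gamma_comp (by fun_prop) (by norm_num) (by norm_num)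
  refine ⟨_, _, (analyticAt_const.mul ((hgamma.mul hgamma').div analyticAt_const hne)).div
    (by fun_prop : AnalyticAt ℂ (fun s : ℂ => 2 * s + 1) 0) (by norm_num),
    eventually_mem_nhdsWithin.mono fun s hs => mul_cuspMellin1_add_one hs, ?_, rfl⟩
  simp [Complex.Gamma_one]
  field_simp

lemma exists_hasRemovableJet_mul_cuspMellin2_add_one :
    ∃ c d, HasRemovableJet (fun s => s * cuspMellin2 (s + 1)) c d := by
  have hgamma : AnalyticAt ℂ (fun s : ℂ => Complex.Gamma (1 - s)) 0 :=
    analyticAt_Gamma_comp (by fun_prop) (by norm_num) (by norm_num)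
  have hgamma' : AnalyticAt ℂ (fun s : ℂ => Complex.Gamma (s + 3 / 2)) 0 :=
    analyticAt_Gamma_comp (by fun_prop) (by norm_num) (by norm_num)
  exact ⟨_, _, _, (((hgamma.mul hgamma').mul (by fun_prop)).div analyticAt_const
    (mul_ne_zero (by norm_num) Gamma_one_half_ne_zero)).neg,
    eventually_mem_nhdsWithin.mono fun s hs => mul_cuspMellin2_add_one hs, rfl, rfl⟩

lemma analyticAt_riemannZeta_comp {g : ℂ → ℂ} (hg : AnalyticAt ℂ g 0) (hg0 : g 0 ≠ 1) :
    AnalyticAt ℂ (fun s => riemannZeta (g s)) 0 :=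
  AnalyticAt.fun_comp (g := riemannZeta) (analyticAt_riemannZeta hg0) hg

lemma hasRemovableJet_riemannZeta_two_mul :
    HasRemovableJet (fun s => riemannZeta (2 * s)) (riemannZeta 0) (2 * deriv riemannZeta 0) := by
  have hzeta : AnalyticAt ℂ (fun s => riemannZeta (2 * s)) 0 :=
    analyticAt_riemannZeta_comp (by fun_prop) (by simp)
  have hd := deriv_comp_mul_left (2 : ℂ) riemannZeta 0
  simpa [hd] using hasRemovableJet_of_analyticAt hzeta

lemma hasRemovableJet_cuspDensity0_leading :
    HasRemovableJet (fun s => sinPiDivPi s * (riemannZeta (2 * s) * cuspMellin0 s))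
      (riemannZeta 0 / 2) (deriv riemannZeta 0) := by
  have hjet := hasRemovableJet_sinPiDivPi_mul_cuspMellin0.mul hasRemovableJet_riemannZeta_two_mul
  exact ((hjet.congr_value (by ring)).congr_deriv (by ring)).congr
    (.of_forall fun s => by ring)

lemma exists_hasRemovableJet_cuspDensity0_shifted :
    ∃ d, HasRemovableJet (fun s => sinPiDivPi s * (s / 4) *
      (riemannZeta (2 * (s + 1)) * cuspMellin0 (s + 1))) 0 d := by
  have hzeta : AnalyticAt ℂ (fun s => -(s / 4) * riemannZeta (2 * (s + 1))) 0 :=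
    AnalyticAt.mul (by fun_prop) (analyticAt_riemannZeta_comp (by fun_prop) (by norm_num))
  have hjet := (hasRemovableJet_of_analyticAt hzeta).mul hasRemovableJet_sinPiDivPi_mul_cuspMellin0
  simp only [zero_div, neg_zero, zero_mul] at hjet
  refine ⟨_, hjet.congr ?_⟩
  filter_upwards [self_mem_nhdsWithin] with s hs
  rw [cuspMellin0_add_one hs]
  ring

lemma hasRemovableJet_arsinh_leading :
    HasRemovableJet (fun s => sinPiDivPi s * (riemannZeta (2 * s - 1) * cuspMellin1 s))
      0 (riemannZeta (-1)) := by
  have hzeta : AnalyticAt ℂ (fun s => riemannZeta (2 * s - 1)) 0 :=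
    analyticAt_riemannZeta_comp (by fun_prop) (by norm_num)
  simpa [cuspMellin1_zero] using hasRemovableJet_sinPiDivPi_mul (hzeta.mul
    (analyticAt_cuspMellin1 (by norm_num) (by norm_num) (by norm_num) (by norm_num)))

lemma exists_hasRemovableJet_arsinh_shifted :
    ∃ d, HasRemovableJet (fun s => sinPiDivPi s * (s / 4) *
      (riemannZeta (2 * (s + 1) - 1) * cuspMellin1 (s + 1))) (-1 / 16) d := by
  obtain ⟨d, hzeta⟩ := hasRemovableJet_sinPiDivPi_mul_riemannZeta two_ne_zero
  obtain ⟨d', hmellin⟩ := exists_hasRemovableJet_mul_cuspMellin1_add_one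
  have hjet := ((hzeta.mul hmellin).const_mul (1 / 4)).congr_value
    (by norm_num : 1 / 4 * (1 / 2 * (-1 / 2)) = (-1 / 16 : ℂ))
  have harg (s : ℂ) : 2 * (s + 1) - 1 = 2 * s + 1 := by ring
  simp only [harg]
  exact ⟨_, hjet.congr (.of_forall fun s => by ring)⟩

lemma exists_hasRemovableJet_cuspDensity2_leading :
    ∃ d, HasRemovableJet (fun s => sinPiDivPi s * (riemannZeta (2 * s + 1) * cuspMellin2 s))
      (1 / 16) d := by
  obtain ⟨d, hzeta⟩ := hasRemovableJet_sinPiDivPi_mul_riemannZeta two_ne_zero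
  have hmellin := hasRemovableJet_of_analyticAt
    (analyticAt_cuspMellin2 (t := 0) (by norm_num) (by norm_num) (by norm_num) (by norm_num))
  have hjet := (hzeta.mul hmellin).congr_value
    (by rw [cuspMellin2_zero]; norm_num : 1 / 2 * cuspMellin2 0 = 1 / 16)
  exact ⟨_, hjet.congr (.of_forall fun s => by ring)⟩

lemma exists_hasRemovableJet_cuspDensity2_shifted :
    ∃ d, HasRemovableJet (fun s => sinPiDivPi s * (s / 4) *
      (riemannZeta (2 * (s + 1) + 1) * cuspMellin2 (s + 1))) 0 d := by
  have hzeta : AnalyticAt ℂ (fun s => 1 / 4 * riemannZeta (2 * (s + 1) + 1)) 0 :=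
    analyticAt_const.mul (analyticAt_riemannZeta_comp (by fun_prop) (by norm_num))
  obtain ⟨c, d, hmellin⟩ := exists_hasRemovableJet_mul_cuspMellin2_add_one
  have hjet := (hasRemovableJet_sinPiDivPi_mul hzeta).mul hmellin
  rw [zero_mul] at hjet
  exact ⟨_, hjet.congr (.of_forall fun s => by ring)⟩

end CuspJets

section CuspSeries

variable {φ ψ : ℝ → ℝ} {c p δ a b : ℝ} {s : ℂ}

lemma rpow_mul_integral_Ioi_eq_kernelTerm (hψ : ∀ u, ψ u = c * φ (u / b)) (p δ : ℝ) (k : ℕ)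
    (s : ℂ) :
    ((((k : ℝ) + 1) ^ p : ℝ) : ℂ) * ∫ u in Set.Ioi (((k : ℝ) + 1) ^ (δ - 1)),
      ((((k : ℝ) + 1) ^ 2 * u ^ 2 - 1 / 4 : ℝ) : ℂ) ^ (-s) * (ψ u : ℂ) =
      c * kernelTerm φ p δ b k s := by
  have hn : 0 < (k : ℝ) + 1 := by positivity
  have hscale := integral_comp_mul_left_Ioi
    (fun x => ((x ^ 2 - 1 / 4 : ℝ) : ℂ) ^ (-s) * (φ (x / ((k + 1) * b)) : ℂ))
    (((k : ℝ) + 1) ^ (δ - 1)) hn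
  have hlower : ((k : ℝ) + 1) * ((k : ℝ) + 1) ^ (δ - 1) = ((k : ℝ) + 1) ^ δ := by
    rw [Real.rpow_sub_one hn.ne', mul_div_cancel₀ _ hn.ne']
  simp only [mul_pow, mul_div_mul_left _ _ hn.ne', hlower, Complex.real_smul] at hscale
  simp only [hψ, Complex.ofReal_mul, mul_left_comm _ (c : ℂ)]
  rw [integral_const_mul, hscale, kernelTerm, Real.rpow_sub_one hn.ne']
  push_cast
  ring

lemma div_sq_add_sq_eq_cuspDensity0 (hb : 0 < b) (u : ℝ) :
    u / (u ^ 2 + b ^ 2) = b⁻¹ * cuspDensity0 (u / b) := by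
  rw [cuspDensity0]
  field_simp
  ring

lemma rpow_sq_add_sq_eq_cuspDensity2 (hb : 0 < b) (u : ℝ) :
    (u * (u ^ 2 + b ^ 2) ^ (-(3 : ℝ) / 2) / 24) * (13 - 15 * u ^ 2 * (u ^ 2 + b ^ 2)⁻¹) =
      (b ^ 2)⁻¹ * cuspDensity2 (u / b) := by
  have hsum : u ^ 2 + b ^ 2 = b ^ 2 * (1 + (u / b) ^ 2) := by
    field_simp
    ring
  have hpow : (b ^ 2) ^ (-(3 : ℝ) / 2) = (b ^ 3)⁻¹ := by
    rw [← Real.rpow_natCast, ← Real.rpow_mul hb.le, ← Real.rpow_natCast, ← Real.rpow_neg hb.le]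
    norm_num
  rw [cuspDensity2, hsum, Real.mul_rpow (by positivity) (by positivity), hpow]
  field_simp

lemma cuspE_succ_eq_kernelTerm (ha : 0 < a) (hb : b = 2 * Real.pi * a) (δ : ℝ) (k : ℕ) (s : ℂ) :
    cuspE a δ (k + 1) s = sinPiDivPi s * (-(b : ℂ)⁻¹ * kernelTerm cuspDensity0 0 δ b k s +
      2 * kernelTerm Real.arsinh 1 δ b k s +
      2 * ((b : ℂ) ^ 2)⁻¹ * kernelTerm cuspDensity2 (-1) δ b k s) := by
  have hb0 : 0 < b := hb ▸ by positivity
  have h₀ := rpow_mul_integral_Ioi_eq_kernelTerm (div_sq_add_sq_eq_cuspDensity0 hb0) 0 δ k s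
  have h₁ := rpow_mul_integral_Ioi_eq_kernelTerm (fun u => (one_mul (Real.arsinh (u / b))).symm)
    1 δ k s
  have h₂ := rpow_mul_integral_Ioi_eq_kernelTerm (rpow_sq_add_sq_eq_cuspDensity2 hb0) (-1) δ k s
  simp only [Real.rpow_zero, Real.rpow_one, Real.rpow_neg_one, Complex.ofReal_one, one_mul,
    Complex.ofReal_inv, Complex.ofReal_pow, Complex.ofReal_add, Complex.ofReal_natCast]
    at h₀ h₁ h₂
  rw [cuspE, cuspE0, cuspE1, cuspE2, sinPiDivPi, ← hb]
  simp only [Nat.cast_add, Nat.cast_one]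
  linear_combination (Complex.sin (Real.pi * s) / Real.pi) * (-h₀ + 2 * h₁ + 2 * h₂)

lemma MellinDensity.locallyDominatedOn_kernelTerm {M : ℂ → ℂ} (h : MellinDensity φ M)
    (hp : p ≤ 1) (hδ : 0 < δ) (hb : 0 < b) :
    LocallyDominatedOn (kernelTerm φ p δ b) {s | 1 < s.re} :=
  let ⟨_, hA⟩ := h.exists_abs_le
  _root_.locallyDominatedOn_kernelTerm h.continuous hA hp hδ hb

lemma locallyDominatedOn_cuspE (ha : 0 < a) (hδ : 0 < δ) :
    LocallyDominatedOn (fun k => cuspE a δ (k + 1)) {s | 1 < s.re} := by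
  have hb : 0 < 2 * Real.pi * a := by positivity
  have h₀ := mellinDensity_cuspDensity0.locallyDominatedOn_kernelTerm zero_le_one hδ hb
  have h₁ := mellinDensity_arsinh.locallyDominatedOn_kernelTerm le_rfl hδ hb
  have h₂ := mellinDensity_cuspDensity2.locallyDominatedOn_kernelTerm (p := -1) (by norm_num) hδ hb
  have hsum := ((h₀.mul_left (f := fun _ => -((2 * Real.pi * a : ℝ) : ℂ)⁻¹)
    continuous_const).add (h₁.mul_left (f := fun _ => 2) continuous_const)).add
    (h₂.mul_left (f := fun _ => 2 * (((2 * Real.pi * a : ℝ) : ℂ) ^ 2)⁻¹) continuous_const)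
  convert hsum.mul_left differentiable_sinPiDivPi.continuous using 1
  ext k s
  exact cuspE_succ_eq_kernelTerm ha rfl δ k s

lemma tsum_cuspE (ha : 0 < a) (hb : b = 2 * Real.pi * a) (hδ : 0 < δ) (hs : 1 < s.re) :
    ∑' k, cuspE a δ (k + 1) s =
      -(b : ℂ)⁻¹ * (sinPiDivPi s * ∑' k, kernelTerm cuspDensity0 0 δ b k s) +
      2 * (sinPiDivPi s * ∑' k, kernelTerm Real.arsinh 1 δ b k s) +
      2 * ((b : ℂ) ^ 2)⁻¹ * (sinPiDivPi s * ∑' k, kernelTerm cuspDensity2 (-1) δ b k s) := by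
  have hb0 : 0 < b := hb ▸ by positivity
  have h₀ := (mellinDensity_cuspDensity0.locallyDominatedOn_kernelTerm zero_le_one hδ
    hb0).summable_norm hs
  have h₁ := (mellinDensity_arsinh.locallyDominatedOn_kernelTerm le_rfl hδ hb0).summable_norm hs
  have h₂ := (mellinDensity_cuspDensity2.locallyDominatedOn_kernelTerm (p := -1) (by norm_num) hδ
    hb0).summable_norm hs
  have hsum := (((h₀.of_norm.hasSum.mul_left (-(b : ℂ)⁻¹)).add
    (h₁.of_norm.hasSum.mul_left 2)).add
    (h₂.of_norm.hasSum.mul_left (2 * ((b : ℂ) ^ 2)⁻¹))).mul_left (sinPiDivPi s)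
  simp only [cuspE_succ_eq_kernelTerm ha hb, hsum.tsum_eq]
  ring

lemma isBigO_inv_pow_mul_atTop {r : ℝ → ℂ} (hr : r =O[atTop] fun b => 1 / b) (m : ℕ) :
    (fun b : ℝ => ((b : ℂ) ^ m)⁻¹ * r b) =O[atTop] fun b => 1 / b := by
  have hinv : (fun b : ℝ => (b : ℂ)⁻¹) =O[atTop] fun _ => (1 : ℝ) := by
    have hone := (tendsto_inv_atTop_zero (𝕜 := ℝ)).isBigO_one ℝ
    simp only [inv_eq_one_div] at hone
    simpa only [zero_add, pow_one] using (isBigO_inv_pow_succ_atTop 0).trans hone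
  simpa only [inv_pow, one_pow, one_mul] using (hinv.pow m).mul hr

lemma exists_meromorphic_eq_sum_kernelSeries (hδ0 : 0 < δ) (hδ1 : δ < 1) :
    ∃ (Z : ℝ → ℂ → ℂ) (r : ℝ → ℂ), r =O[atTop] (fun b => 1 / b) ∧ ∀ b, 0 < b →
      Meromorphic (Z b) ∧
      (∀ s : ℂ, 1 < s.re → Z b s =
        -(b : ℂ)⁻¹ * (sinPiDivPi s * ∑' k, kernelTerm cuspDensity0 0 δ b k s) +
        2 * (sinPiDivPi s * ∑' k, kernelTerm Real.arsinh 1 δ b k s) +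
        2 * ((b : ℂ) ^ 2)⁻¹ * (sinPiDivPi s * ∑' k, kernelTerm cuspDensity2 (-1) δ b k s)) ∧
      ∃ c, HasRemovableJet (Z b) c (2 * riemannZeta (-1) * b +
        (riemannZeta 0 * Real.log b - deriv riemannZeta 0) + r b) := by
  obtain ⟨_, hβ₀⟩ := exists_hasRemovableJet_cuspDensity0_shifted
  obtain ⟨_, hβ₁⟩ := exists_hasRemovableJet_arsinh_shifted
  obtain ⟨α, hα₂⟩ := exists_hasRemovableJet_cuspDensity2_leading
  obtain ⟨_, hβ₂⟩ := exists_hasRemovableJet_cuspDensity2_shifted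
  obtain ⟨Z₀, r₀, hr₀, hZ₀⟩ := mellinDensity_cuspDensity0.exists_meromorphic_eq_tsum_kernelTerm
    (p := 0) zero_le_one hδ0 hδ1 (by simpa using hasRemovableJet_cuspDensity0_leading)
    (by simpa using hβ₀)
  obtain ⟨Z₁, r₁, hr₁, hZ₁⟩ := mellinDensity_arsinh.exists_meromorphic_eq_tsum_kernelTerm
    (p := 1) le_rfl hδ0 hδ1 (by simpa using hasRemovableJet_arsinh_leading) (by simpa using hβ₁)
  obtain ⟨Z₂, r₂, hr₂, hZ₂⟩ := mellinDensity_cuspDensity2.exists_meromorphic_eq_tsum_kernelTerm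
    (p := -1) (by norm_num) hδ0 hδ1 (by simpa using hα₂) (by simpa using hβ₂)
  have hR₀ := (isBigO_inv_pow_mul_atTop hr₀ 1).const_mul_left (-1)
  have hR₂ := ((isBigO_inv_pow_mul_atTop hr₂ 2).add
    ((isBigO_inv_pow_succ_atTop 0).const_mul_left α)).const_mul_left 2
  refine ⟨fun b s => -(b : ℂ)⁻¹ * Z₀ b s + 2 * Z₁ b s + 2 * ((b : ℂ) ^ 2)⁻¹ * Z₂ b s, _,
    (hR₀.add (hr₁.const_mul_left 2)).add hR₂, fun b hb => ?_⟩
  obtain ⟨hmer₀, heq₀, _, hjet₀⟩ := hZ₀ b hb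
  obtain ⟨hmer₁, heq₁, _, hjet₁⟩ := hZ₁ b hb
  obtain ⟨hmer₂, heq₂, _, hjet₂⟩ := hZ₂ b hb
  refine ⟨by fun_prop, fun s hs => by simp only [heq₀ s hs, heq₁ s hs, heq₂ s hs], _,
    (((hjet₀.const_mul _).add (hjet₁.const_mul 2)).add (hjet₂.const_mul _)).congr_deriv ?_⟩
  have hb' : (b : ℂ) ≠ 0 := Complex.ofReal_ne_zero.2 hb.ne'
  field_simp
  ring

lemma exists_meromorphic_eq_tsum_cuspE (hδ0 : 0 < δ) (hδ1 : δ < 1) :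
    ∃ (F : ℝ → ℂ → ℂ) (r : ℝ → ℂ), r =O[atTop] (fun a => 1 / a) ∧ ∀ a, 0 < a →
      Meromorphic (F a) ∧
      (∀ s : ℂ, 1 < s.re → F a s = ∑' k, cuspE a δ (k + 1) s) ∧
      AnalyticAt ℂ (F a) 0 ∧
      deriv (F a) 0 =
        4 * Real.pi * riemannZeta (-1) * a + riemannZeta 0 * Real.log a + r a := by
  obtain ⟨Z, r, hr, hZ⟩ := exists_meromorphic_eq_sum_kernelSeries hδ0 hδ1
  have hpos {a : ℝ} (ha : 0 < a) : 0 < 2 * Real.pi * a := by positivity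
  choose! hmer heq c hjet using hZ
  refine ⟨fun a => Function.update (Z (2 * Real.pi * a)) 0 (c (2 * Real.pi * a)),
    fun a => r (2 * Real.pi * a), ?_, fun a ha => ⟨fun _ => (hmer _ (hpos ha) _).update _ _,
      fun s hs => ?_, (hjet _ (hpos ha)).analyticAt_and_hasDerivAt_update.1,
      (hjet _ (hpos ha)).analyticAt_and_hasDerivAt_update.2.deriv.trans ?_⟩⟩
  · have hlim := tendsto_id.const_mul_atTop (r := 2 * Real.pi) (by positivity)
    refine (hr.comp_tendsto hlim).trans ?_
    simpa [Function.comp_def, mul_comm] using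
      (Asymptotics.isBigO_refl (fun a : ℝ => 1 / a) atTop).const_mul_left (2 * Real.pi)⁻¹
  · have hs0 : s ≠ 0 := fun h => by norm_num [h] at hs
    simp only [Function.update_of_ne hs0, heq _ (hpos ha) s hs, tsum_cuspE ha rfl hδ0 hs]
  · have hlog : (Real.log (2 * Real.pi * a) : ℂ) = Real.log (2 * Real.pi) + Real.log a := by
      rw [Real.log_mul (by positivity) ha.ne']
      exact Complex.ofReal_add _ _
    have hzeta : deriv riemannZeta 0 = riemannZeta 0 * Real.log (2 * Real.pi) := by
      rw [deriv_riemannZeta_zero, riemannZeta_zero, Complex.ofReal_log (by positivity)]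
      push_cast
      ring
    rw [hlog, hzeta]
    push_cast
    ring

end CuspSeries

theorem statement0_general (δ : ℝ) (hδ0 : 0 < δ) (hδ1 : δ < 1) :
    ∃ F : ℝ → ℂ → ℂ,
      (∀ a : ℝ, 0 < a →
        (∀ s ∈ {s : ℂ | 1 < s.re}, Summable (fun k : ℕ => ‖cuspE a δ (k + 1) s‖)) ∧
        TendstoLocallyUniformlyOn
          (fun (n : ℕ) (s : ℂ) => ∑ k ∈ Finset.range n, cuspE a δ (k + 1) s)
          (fun s : ℂ => ∑' k : ℕ, cuspE a δ (k + 1) s) atTop {s : ℂ | 1 < s.re} ∧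
        MeromorphicOn (F a) Set.univ ∧
        Set.EqOn (F a) (fun s : ℂ => ∑' k : ℕ, cuspE a δ (k + 1) s) {s : ℂ | 1 < s.re} ∧
        AnalyticAt ℂ (F a) 0) ∧
      (fun a : ℝ => deriv (F a) 0 -
          (4 * (Real.pi : ℂ) * riemannZeta (-1) * (a : ℂ) +
            riemannZeta 0 * (Real.log a : ℂ)))
        =O[atTop] (fun a : ℝ => 1 / a) := by
  obtain ⟨F, r, hr, hF⟩ := exists_meromorphic_eq_tsum_cuspE hδ0 hδ1
  choose! hmer heq han hderiv using hF
  refine ⟨F, fun a ha => ?_, hr.congr' ?_ .rfl⟩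
  · have hdom := locallyDominatedOn_cuspE ha hδ0
    exact ⟨fun s hs => hdom.summable_norm hs, hdom.tendstoLocallyUniformlyOn_tsum,
      (hmer a ha).meromorphicOn, heq a ha, han a ha⟩
  · filter_upwards [eventually_gt_atTop 0] with a ha
    rw [hderiv a ha, add_sub_cancel_left]

/-- for fixed `δ ∈ (0,1/8)`, for every `a > 0` the series
`ζ_E(s) = Σ_{k≥1} (E_{0,k}(s) + E_{1,k}(s) + E_{2,k}(s))` converges absolutely and locally
uniformly on the strip `1 < Re(s) < 2`, its sum extends to a meromorphic function on `ℂ`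
holomorphic at `s = 0`, and the derivative at `0` satisfies
`ζ_E'(0) = 4π·ζ(-1)·a + ζ(0)·log a + O(1/a)` as `a → ∞`. -/
theorem statement0 (δ : ℝ) (hδ0 : 0 < δ) (hδ1 : δ < 1 / 8) :
    ∃ F : ℝ → ℂ → ℂ,
      (∀ a : ℝ, 0 < a →
        (∀ s ∈ {s : ℂ | 1 < s.re ∧ s.re < 2},
          Summable (fun k : ℕ => ‖cuspE a δ (k + 1) s‖)) ∧
        TendstoLocallyUniformlyOn
          (fun (n : ℕ) (s : ℂ) => ∑ k ∈ Finset.range n, cuspE a δ (k + 1) s)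
          (fun s : ℂ => ∑' k : ℕ, cuspE a δ (k + 1) s)
          atTop {s : ℂ | 1 < s.re ∧ s.re < 2} ∧
        MeromorphicOn (F a) Set.univ ∧
        Set.EqOn (F a) (fun s : ℂ => ∑' k : ℕ, cuspE a δ (k + 1) s)
          {s : ℂ | 1 < s.re ∧ s.re < 2} ∧
        AnalyticAt ℂ (F a) 0) ∧
      (fun a : ℝ => deriv (F a) 0 -
          (4 * (Real.pi : ℂ) * riemannZeta (-1) * (a : ℂ) +
            riemannZeta 0 * (Real.log a : ℂ)))
        =O[atTop] (fun a : ℝ => 1 / a) := by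
  have hstrip : {s : ℂ | 1 < s.re ∧ s.re < 2} ⊆ {s | 1 < s.re} := fun _ hs => hs.1
  obtain ⟨F, hF, hderiv⟩ := statement0_general δ hδ0 (hδ1.trans (by norm_num))
  refine ⟨F, fun a ha => ?_, hderiv⟩
  obtain ⟨hsum, hunif, hmer, heq, han⟩ := hF a ha
  exact ⟨fun s hs => hsum s (hstrip hs), hunif.mono hstrip, hmer, heq.mono hstrip, han⟩
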